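/- Let G be a cyclically 4-edge-connected cubic simple graph containing a 4-cycle v1v2v3v4 (with edges v1v2, v2v3, v3v4, v4v1), and for each i let ui be the third neighbor of vi outside the cycle; assume u1, u2, u3, u4 are pairwise distinct, none of them lies on the cycle, and none of u1u2, u2u3, u3u4, u1u4 is an edge of G. Let G1 be the graph obtained from G by deleting v1, v2, v3, v4 and adding the edges u1u4 and u2u3, and let G2 be obtained by deleting v1, v2, v3, v4 and adding the edges u1u2 and u3u4. Then ν(G) ≥ 4 · min{ν(G1), ν(G2)}. -/

import Mathlib

namespace CiDC

open SimpleGraph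

/-- A circuit in a graph: a connected 2-regular subgraph. -/
def IsCircuit {V : Type*} {G : SimpleGraph V} (H : G.Subgraph) : Prop :=
  H.Connected ∧ ∀ v ∈ H.verts, (H.neighborSet v).ncard = 2

open scoped Classical in
/-- A circuit double cover: a multiset of circuits covering every edge exactly twice
(counted with multiplicity). -/
def IsCiDC {V : Type*} (G : SimpleGraph V) (C : Multiset G.Subgraph) : Prop :=
  (∀ H ∈ C, IsCircuit H) ∧ ∀ e ∈ G.edgeSet, C.countP (fun H => e ∈ H.edgeSet) = 2

/-- ν(G): the number of circuit double covers of `G`. -/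
noncomputable def nu {V : Type*} (G : SimpleGraph V) : ℕ :=
  {C : Multiset G.Subgraph | IsCiDC G C}.ncard

/-- A cubic graph: every vertex has degree 3. -/
def IsCubic {V : Type*} (G : SimpleGraph V) : Prop :=
  ∀ v : V, (G.neighborSet v).ncard = 3



/-- The set of edges of `G` between `S` and its complement. -/
def edgeCutOf {V : Type*} (G : SimpleGraph V) (S : Set V) : Set (Sym2 V) :=
  {e | ∃ u v : V, e = s(u, v) ∧ G.Adj u v ∧ u ∈ S ∧ v ∉ S}

/-- An edge cut: a nonempty set of edges of the form `E(S, V \ S)`. -/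
def IsEdgeCut {V : Type*} (G : SimpleGraph V) (F : Set (Sym2 V)) : Prop :=
  F.Nonempty ∧ ∃ S : Set V, F = edgeCutOf G S

/-- A set of edges is circuit-separating if after its removal at least two of the
resulting components contain a circuit. -/
def CircuitSeparating {V : Type*} (G : SimpleGraph V) (F : Set (Sym2 V)) : Prop :=
  ∃ H₁ H₂ : (G.deleteEdges F).Subgraph,
    IsCircuit H₁ ∧ IsCircuit H₂ ∧
      ∃ x ∈ H₁.verts, ∃ y ∈ H₂.verts, ¬ (G.deleteEdges F).Reachable x y

/-- Cyclically 4-edge-connected: every circuit-separating edge cut has size at least 4. -/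
def CyclicallyFourEdgeConnected {V : Type*} (G : SimpleGraph V) : Prop :=
  ∀ F : Set (Sym2 V), IsEdgeCut G F → CircuitSeparating G F → 4 ≤ F.ncard

/-- 2-edge-connected: connected and bridgeless. -/
def TwoEdgeConnected {V : Type*} (G : SimpleGraph V) : Prop :=
  G.Connected ∧ ∀ e : Sym2 V, ¬ G.IsBridge e

/-- 3-edge-connected: connected, and still connected after deleting any ≤ 2 edges. -/
def ThreeEdgeConnected {V : Type*} (G : SimpleGraph V) : Prop :=
  G.Connected ∧ ∀ F : Set (Sym2 V), F.ncard ≤ 2 → (G.deleteEdges F).Connected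


section Core
set_option linter.unusedSectionVars false
variable {V : Type*} [DecidableEq V]

/-- degree of a vertex in an edge set -/
def deg (K : Finset (Sym2 V)) (x : V) : ℕ := (K.filter (x ∈ ·)).card

/-- `X` is closed in `S` under sharing a vertex. -/
def Closed (X S : Finset (Sym2 V)) : Prop :=
  ∀ c ∈ X, ∀ d ∈ S, ∀ x, x ∈ c → x ∈ d → d ∈ X

/-- connected edge set -/
def Conn (K : Finset (Sym2 V)) : Prop :=
  K.Nonempty ∧ ∀ X ⊆ K, X.Nonempty → Closed X K → X = K

/-- circuit, as an edge set -/
def IsCirc (K : Finset (Sym2 V)) : Prop :=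
  Conn K ∧ ∀ x, deg K x = 0 ∨ deg K x = 2

/-- vertex-disjoint -/
def Dj (P Q : Finset (Sym2 V)) : Prop := ∀ c ∈ P, ∀ d ∈ Q, ∀ x, x ∈ c → x ∈ d → False

theorem Dj.symm {P Q : Finset (Sym2 V)} (h : Dj P Q) : Dj Q P :=
  fun c hc d hd x h1 h2 => h d hd c hc x h2 h1

theorem Dj.disjoint {P Q : Finset (Sym2 V)} (h : Dj P Q) : Disjoint P Q := by
  rw [Finset.disjoint_left]
  intro e he he'
  induction e with | _ a b => exact h _ he _ he' a (by simp) (by simp)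

theorem deg_union {P Q : Finset (Sym2 V)} (h : Disjoint P Q) (x : V) :
    deg (P ∪ Q) x = deg P x + deg Q x := by
  unfold deg
  rw [Finset.filter_union, Finset.card_union_of_disjoint]
  exact Finset.disjoint_filter_filter h

theorem deg_eq_zero {K : Finset (Sym2 V)} {x : V} : deg K x = 0 ↔ ∀ e ∈ K, x ∉ e := by
  simp [deg, Finset.filter_eq_empty_iff]

theorem deg_mono {P Q : Finset (Sym2 V)} (h : P ⊆ Q) (x : V) : deg P x ≤ deg Q x :=
  Finset.card_le_card (Finset.filter_subset_filter _ h)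

theorem Conn.union {P Q : Finset (Sym2 V)} (hP : Conn P) (hQ : Conn Q)
    (x : V) (h1 : deg P x ≠ 0) (h2 : deg Q x ≠ 0) : Conn (P ∪ Q) := by
  rw [Ne, deg_eq_zero] at h1 h2
  push Not at h1 h2
  obtain ⟨e, he, hxe⟩ := h1
  obtain ⟨f, hf, hxf⟩ := h2
  refine ⟨⟨e, by simp [he]⟩, fun X hX hne hcl => ?_⟩
  have key : ∀ R, R ⊆ P ∪ Q → Conn R → (X ∩ R).Nonempty → R ⊆ X := by
    intro R hR hc hn
    have := hc.2 (X ∩ R) Finset.inter_subset_right hn (by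
      intro c hc d hd y h1 h2
      rw [Finset.mem_inter] at hc ⊢
      exact ⟨hcl c hc.1 d (hR hd) y h1 h2, hd⟩)
    rw [← this]; exact Finset.inter_subset_left
  have hPQ : P ⊆ X ∧ Q ⊆ X := by
    obtain ⟨g, hg⟩ := hne
    rcases Finset.mem_union.1 (hX hg) with h | h
    · have h1 := key P Finset.subset_union_left hP ⟨g, by simp [hg, h]⟩
      refine ⟨h1, key Q Finset.subset_union_right hQ ⟨f, ?_⟩⟩
      simp [hf, hcl e (h1 he) f (by simp [hf]) x hxe hxf]
    · have h1 := key Q Finset.subset_union_right hQ ⟨g, by simp [hg, h]⟩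
      refine ⟨key P Finset.subset_union_left hP ⟨e, ?_⟩, h1⟩
      simp [he, hcl f (h1 hf) e (by simp [he]) x hxf hxe]
  exact Finset.Subset.antisymm hX (Finset.union_subset hPQ.1 hPQ.2)

theorem conn_singleton (e : Sym2 V) : Conn {e} := by
  refine ⟨by simp, fun X hX hn _ => ?_⟩
  rcases Finset.subset_singleton_iff.1 hX with h | h
  · simp [h] at hn
  · exact h

/-- connected components of an edge set -/
noncomputable def comps (S : Finset (Sym2 V)) : Finset (Finset (Sym2 V)) := by
  classical exact S.powerset.filter (fun X => Closed X S ∧ Conn X)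

theorem mem_comps {S X : Finset (Sym2 V)} : X ∈ comps S ↔ X ⊆ S ∧ Closed X S ∧ Conn X := by
  simp [comps]

theorem Closed.sdiff {X S : Finset (Sym2 V)} (h : Closed X S) : Closed (S \ X) S := by
  intro c hc d hd x h1 h2
  rw [Finset.mem_sdiff] at hc ⊢
  exact ⟨hd, fun hdX => hc.2 (h d hdX c hc.1 x h2 h1)⟩

theorem comps_unique {S X Y : Finset (Sym2 V)} (hX : X ∈ comps S) (hY : Y ∈ comps S)
    {e : Sym2 V} (h1 : e ∈ X) (h2 : e ∈ Y) : X = Y := by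
  rw [mem_comps] at hX hY
  have a : X ∩ Y = X := hX.2.2.2 _ Finset.inter_subset_left ⟨e, by simp [h1, h2]⟩ (by
    intro c hc d hd x k1 k2
    rw [Finset.mem_inter] at hc ⊢
    exact ⟨hd, hY.2.1 c hc.2 d (hX.1 hd) x k1 k2⟩)
  have b : X ∩ Y = Y := hY.2.2.2 _ Finset.inter_subset_right ⟨e, by simp [h1, h2]⟩ (by
    intro c hc d hd x k1 k2
    rw [Finset.mem_inter] at hc ⊢
    exact ⟨hX.2.1 c hc.1 d (hY.1 hd) x k1 k2, hd⟩)
  rw [← a, b]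

theorem comps_exists {S : Finset (Sym2 V)} {e : Sym2 V} (he : e ∈ S) :
    ∃ X ∈ comps S, e ∈ X := by
  classical
  let X := S.filter (fun d => ∀ Y ⊆ S, Closed Y S → e ∈ Y → d ∈ Y)
  have hXS : X ⊆ S := Finset.filter_subset _ _
  have heX : e ∈ X := by simp [X, he]
  have hcl : Closed X S := by
    intro c hc d hd x h1 h2
    simp only [X, Finset.mem_filter] at hc ⊢
    exact ⟨hd, fun Y hY hYc heY => hYc c (hc.2 Y hY hYc heY) d hd x h1 h2⟩
  have hmin : ∀ Y ⊆ S, Closed Y S → e ∈ Y → X ⊆ Y := by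
    intro Y hY hYc heY d hd
    simp only [X, Finset.mem_filter] at hd
    exact hd.2 Y hY hYc heY
  refine ⟨X, mem_comps.2 ⟨hXS, hcl, ⟨e, heX⟩, fun Y hY hn hYc => ?_⟩, heX⟩
  have hYS : Closed Y S := by
    intro c hc d hd x h1 h2
    exact hYc c hc d (hcl c (hY hc) d hd x h1 h2) x h1 h2
  by_cases heY : e ∈ Y
  · exact Finset.Subset.antisymm hY (hmin Y (hY.trans hXS) hYS heY)
  · have h3 := hmin (S \ Y) Finset.sdiff_subset hYS.sdiff (by simp [he, heY])
    obtain ⟨g, hg⟩ := hn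
    have := h3 (hY hg)
    simp [hg] at this

theorem comps_empty : comps (∅ : Finset (Sym2 V)) = ∅ := by
  ext X
  simp only [mem_comps, Finset.notMem_empty, iff_false]
  rintro ⟨h1, -, h2⟩
  have := h2.1
  simp_all

theorem comps_conn {P : Finset (Sym2 V)} (h : Conn P) : comps P = {P} := by
  ext X
  rw [mem_comps, Finset.mem_singleton]
  constructor
  · rintro ⟨h1, h2, h3⟩
    exact h.2 X h1 h3.1 h2
  · rintro rfl
    exact ⟨subset_rfl, fun c hc d hd x _ _ => hd, h⟩

theorem comps_two {P Q : Finset (Sym2 V)} (hP : Conn P) (hQ : Conn Q) (h : Dj P Q) :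
    comps (P ∪ Q) = {P, Q} := by
  have c1 : P ∈ comps (P ∪ Q) := mem_comps.2 ⟨Finset.subset_union_left, by
    intro c hc d hd x h1 h2
    rcases Finset.mem_union.1 hd with h' | h'
    · exact h'
    · exact (h c hc d h' x h1 h2).elim, hP⟩
  have c2 : Q ∈ comps (P ∪ Q) := mem_comps.2 ⟨Finset.subset_union_right, by
    intro c hc d hd x h1 h2
    rcases Finset.mem_union.1 hd with h' | h'
    · exact (h d h' c hc x h2 h1).elim
    · exact h', hQ⟩
  ext X
  rw [Finset.mem_insert, Finset.mem_singleton]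
  constructor
  · intro hX
    obtain ⟨e, he⟩ := (mem_comps.1 hX).2.2.1
    rcases Finset.mem_union.1 ((mem_comps.1 hX).1 he) with h' | h'
    · exact Or.inl (comps_unique hX c1 he h')
    · exact Or.inr (comps_unique hX c2 he h')
  · rintro (rfl | rfl) <;> assumption

theorem deg_closed {X S : Finset (Sym2 V)} (hX : X ⊆ S) (h : Closed X S) (x : V) :
    deg X x = 0 ∨ deg X x = deg S x := by
  by_cases h0 : deg X x = 0
  · exact Or.inl h0
  · right
    rw [deg_eq_zero] at h0
    push Not at h0
    obtain ⟨c, hc, hxc⟩ := h0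
    unfold deg
    congr 1
    ext d
    simp only [Finset.mem_filter]
    exact ⟨fun k => ⟨hX k.1, k.2⟩, fun k => ⟨h c hc d k.1 x hxc k.2, k.2⟩⟩

/-- how often an edge is covered -/
def cov (C : Multiset (Finset (Sym2 V))) (e : Sym2 V) : ℕ := C.countP (e ∈ ·)

@[simp] theorem cov_zero (e : Sym2 V) : cov 0 e = 0 := rfl

theorem cov_cons (K : Finset (Sym2 V)) (C : Multiset (Finset (Sym2 V))) (e : Sym2 V) :
    cov (K ::ₘ C) e = cov C e + if e ∈ K then 1 else 0 := by
  simp [cov, Multiset.countP_cons]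

theorem cov_add (C D : Multiset (Finset (Sym2 V))) (e : Sym2 V) :
    cov (C + D) e = cov C e + cov D e := by
  simp [cov]

theorem cov_comps (S : Finset (Sym2 V)) (e : Sym2 V) :
    cov (comps S).val e = if e ∈ S then 1 else 0 := by
  classical
  unfold cov
  rw [Multiset.countP_eq_card_filter, ← Finset.filter_val, Finset.card_val]
  split_ifs with h
  · obtain ⟨X, hX, heX⟩ := comps_exists h
    rw [Finset.card_eq_one]
    refine ⟨X, ?_⟩
    ext Y
    rw [Finset.mem_filter, Finset.mem_singleton]
    constructor
    · rintro ⟨h1, h2⟩; exact comps_unique h1 hX h2 heX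
    · rintro rfl; exact ⟨hX, heX⟩
  · rw [Finset.card_eq_zero, Finset.filter_eq_empty_iff]
    intro Y hY heY
    exact h ((mem_comps.1 hY).1 heY)

/-- following a path from a degree-one vertex -/
theorem path_comp (n : ℕ) : ∀ (S : Finset (Sym2 V)), S.card = n → (∀ e ∈ S, ¬ e.IsDiag) →
    (∀ x, deg S x ≤ 2) → ∀ a, deg S a = 1 →
    ∃ X ⊆ S, ∃ w, w ≠ a ∧ deg S w = 1 ∧ Closed X S ∧ Conn X ∧ deg X a = 1 ∧ deg X w = 1 ∧
      ∀ y, deg S y = 1 → y ≠ a → y ≠ w → deg X y = 0 := by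
  induction n with
  | zero =>
    intro S hS _ _ a ha
    rw [Finset.card_eq_zero] at hS
    simp [hS, deg] at ha
  | succ n ih =>
    intro S hS hd h2 a ha
    have ha' := ha
    unfold deg at ha'
    rw [Finset.card_eq_one] at ha'
    obtain ⟨c, hc⟩ := ha'
    have hcS : c ∈ S ∧ a ∈ c := by
      have : c ∈ S.filter (a ∈ ·) := by rw [hc]; simp
      simpa using this
    have honly : ∀ d ∈ S, a ∈ d → d = c := by
      intro d hdS had
      have : d ∈ S.filter (a ∈ ·) := by simp [hdS, had]
      rw [hc] at this; simpa using this
    obtain ⟨x, rfl⟩ := hcS.2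
    have hax : a ≠ x := by
      have := hd _ hcS.1
      simpa using this
    have hdeg1 : ∀ y, deg ({s(a, x)} : Finset (Sym2 V)) y = if y = a ∨ y = x then 1 else 0 := by
      intro y
      unfold deg
      rw [Finset.filter_singleton]
      simp only [Sym2.mem_iff]
      split_ifs <;> simp
    have hsplit : ∀ y, deg S y = deg (S.erase s(a, x)) y + if y = a ∨ y = x then 1 else 0 := by
      intro y
      rw [← hdeg1, ← deg_union (by simp)]
      congr 1
      ext z
      by_cases hz : z = s(a, x) <;> simp [hz, hcS.1]
    by_cases hx : deg S x = 1
    · refine ⟨{s(a, x)}, by simpa using hcS.1, x, hax.symm, hx, ?_, conn_singleton _, ?_, ?_, ?_⟩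
      · intro c hc d hd' y h1 h3
        rw [Finset.mem_singleton] at hc ⊢
        subst hc
        rcases Sym2.mem_iff.1 h1 with rfl | rfl
        · exact honly d hd' h3
        · have := hx
          unfold deg at this
          rw [Finset.card_eq_one] at this
          obtain ⟨f, hf⟩ := this
          have k1 : d ∈ S.filter (y ∈ ·) := by simp [hd', h3]
          have k2 : s(a, y) ∈ S.filter (y ∈ ·) := by simp [hcS.1]
          rw [hf, Finset.mem_singleton] at k1 k2
          rw [k1, k2]
      · rw [hdeg1]; simp
      · rw [hdeg1]; simp
      · intro y _ h3 h4
        rw [hdeg1]; simp [h3, h4]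
    · have hx1 : deg (S.erase s(a, x)) x = 1 := by
        have h3 := hsplit x
        have h4 := h2 x
        simp at h3
        have h5 : deg (S.erase s(a, x)) x ≠ 0 := by omega
        omega
      have ha0 : deg (S.erase s(a, x)) a = 0 := by
        have h3 := hsplit a
        simp at h3; omega
      obtain ⟨X, hX, w, hwx, hw1, hcl, hconn, hXx, hXw, hXo⟩ := ih (S.erase s(a, x))
        (by rw [Finset.card_erase_of_mem hcS.1, hS]; rfl)
        (fun e he => hd e (Finset.mem_of_mem_erase he))
        (fun y => (deg_mono (Finset.erase_subset _ _) y).trans (h2 y)) x hx1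
      have hwa : w ≠ a := by rintro rfl; omega
      have hXa : deg X a = 0 := by
        have := deg_mono hX a; omega
      have hnot : s(a, x) ∉ X := fun h => by
        have := hX h
        simp at this
      have hdisj : Disjoint X {s(a, x)} := by simpa using hnot
      refine ⟨X ∪ {s(a, x)}, ?_, w, hwa, ?_, ?_, ?_, ?_, ?_, ?_⟩
      · exact Finset.union_subset (hX.trans (Finset.erase_subset _ _)) (by simpa using hcS.1)
      · rw [hsplit, hw1]; simp [hwa, hwx]
      · intro c hc d hd' y h1 h3
        by_cases hdc : d = s(a, x)
        · simp [hdc]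
        have hde : d ∈ S.erase s(a, x) := by simp [hdc, hd']
        rw [Finset.mem_union, Finset.mem_singleton] at hc ⊢
        rcases hc with hc | rfl
        · exact Or.inl (hcl c hc d hde y h1 h3)
        · rcases Sym2.mem_iff.1 h1 with rfl | rfl
          · exact Or.inr (honly d hd' h3)
          · left
            have : deg X y ≠ 0 := by omega
            rw [Ne, deg_eq_zero] at this
            push Not at this
            obtain ⟨f, hf, hyf⟩ := this
            exact hcl f hf d hde y hyf h3
      · refine hconn.union (conn_singleton _) x (by omega) (by rw [hdeg1]; simp)
      · rw [deg_union hdisj, hdeg1, hXa]; simp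
      · rw [deg_union hdisj, hdeg1, hXw]; simp [hwa, hwx]
      · intro y hy h3 h4
        have hyx : y ≠ x := by rintro rfl; exact hx hy
        rw [deg_union hdisj, hdeg1, hXo y ?_ hyx h4]
        · simp [h3, hyx]
        · have := hsplit y
          simp [h3, hyx] at this
          omega
end Core

section Core2
set_option linter.unusedSectionVars false
variable {V : Type*} [DecidableEq V]

/-- The 4-cycle `v 0, v 1, v 2, v 3`, its outer neighbours `u k`, and the remaining edges `E`. -/
structure Setup (V : Type*) [DecidableEq V] where
  v : Fin 4 → V
  u : Fin 4 → V
  E : Finset (Sym2 V)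
  v_inj : Function.Injective v
  huv : ∀ k j, u k ≠ v j
  noloop : ∀ e ∈ E, ¬ e.IsDiag
  hE : ∀ e ∈ E, ∀ k, v k ∈ e → e = s(v k, u k)
  hs : ∀ k, s(v k, u k) ∈ E
  hdeg : ∀ k, deg E (u k) = 3

namespace Setup
variable (s : Setup V)

/-- cycle edges -/
def c (k : Fin 4) : Sym2 V := s(s.v k, s.v (k + 1))
/-- sets of cycle edges -/
def g (J : Finset (Fin 4)) : Finset (Sym2 V) := J.image s.c
/-- edge set with given trace and given cycle edges -/
def glue (P : Finset (Sym2 V)) (J : Finset (Fin 4)) : Finset (Sym2 V) := P ∪ s.g J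
/-- spokes used -/
def sp (P : Finset (Sym2 V)) : Finset (Fin 4) := Finset.univ.filter (fun k => s(s.v k, s.u k) ∈ P)

theorem c_notMem (k : Fin 4) : s.c k ∉ s.E := by
  intro h
  have := s.hE _ h k (by simp [c])
  unfold c at this
  rw [Sym2.congr_right] at this
  exact s.huv _ _ this.symm

theorem v_mem_c (j k : Fin 4) : s.v j ∈ s.c k ↔ j = k ∨ j = k + 1 := by
  simp [c, s.v_inj.eq_iff]

theorem c_inj : Function.Injective s.c := by
  intro j k h
  have h1 := s.v_mem_c j j
  have h2 := s.v_mem_c (j+1) j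
  rw [h, v_mem_c] at h1 h2
  simp only [true_or, or_true, iff_true] at h1 h2
  clear h
  revert j k
  decide

theorem mem_g {J : Finset (Fin 4)} {k : Fin 4} : s.c k ∈ s.g J ↔ k ∈ J := by
  simp [g, s.c_inj.eq_iff]

theorem g_disj (J : Finset (Fin 4)) {P : Finset (Sym2 V)} (hP : P ⊆ s.E) : Disjoint P (s.g J) := by
  rw [Finset.disjoint_right]
  intro e he h
  simp only [g, Finset.mem_image] at he
  obtain ⟨k, _, rfl⟩ := he
  exact s.c_notMem k (hP h)

theorem mem_mk_E {P : Finset (Sym2 V)} {J : Finset (Fin 4)} {e : Sym2 V} (he : e ∈ s.E) :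
    e ∈ s.glue P J ↔ e ∈ P := by
  simp only [glue, Finset.mem_union, or_iff_left_iff_imp]
  intro h
  exact absurd h (Finset.disjoint_left.1 (s.g_disj J subset_rfl) he)

theorem mem_mk_c {P : Finset (Sym2 V)} (hP : P ⊆ s.E) {J : Finset (Fin 4)} {k : Fin 4} :
    s.c k ∈ s.glue P J ↔ k ∈ J := by
  simp only [glue, Finset.mem_union, mem_g, or_iff_right_iff_imp]
  intro h
  exact absurd (hP h) (s.c_notMem k)

theorem mk_inter {P : Finset (Sym2 V)} (hP : P ⊆ s.E) (J : Finset (Fin 4)) :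
    s.glue P J ∩ s.E = P := by
  ext e
  rw [Finset.mem_inter]
  constructor
  · rintro ⟨h1, h2⟩; exact (s.mem_mk_E h2).1 h1
  · intro h; exact ⟨(s.mem_mk_E (hP h)).2 h, hP h⟩

theorem deg_mk {P : Finset (Sym2 V)} (hP : P ⊆ s.E) (J : Finset (Fin 4)) (x : V) :
    deg (s.glue P J) x = deg P x + deg (s.g J) x := deg_union (s.g_disj J hP) x

theorem deg_g_v (J : Finset (Fin 4)) (k : Fin 4) :
    deg (s.g J) (s.v k) = (if k ∈ J then 1 else 0) + (if k - 1 ∈ J then 1 else 0) := by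
  have : (s.g J).filter (s.v k ∈ ·) = s.g (J.filter (fun j => j = k ∨ j = k - 1)) := by
    ext e
    simp only [g, Finset.mem_filter, Finset.mem_image]
    constructor
    · rintro ⟨⟨j, hj, rfl⟩, h⟩
      rw [v_mem_c] at h
      exact ⟨j, ⟨hj, by clear hj; revert j k; decide⟩, rfl⟩
    · rintro ⟨j, ⟨hj, h⟩, rfl⟩
      refine ⟨⟨j, hj, rfl⟩, ?_⟩
      rw [v_mem_c]
      clear hj; revert j k; decide
  unfold deg
  rw [this, g, Finset.card_image_of_injective _ s.c_inj]
  clear this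
  revert J k
  decide

theorem deg_g_off (J : Finset (Fin 4)) {x : V} (hx : ∀ k, x ≠ s.v k) : deg (s.g J) x = 0 := by
  rw [deg_eq_zero]
  intro e he
  simp only [g, Finset.mem_image] at he
  obtain ⟨k, _, rfl⟩ := he
  simp [c, hx]

theorem mem_sp {P : Finset (Sym2 V)} {k : Fin 4} : k ∈ s.sp P ↔ s(s.v k, s.u k) ∈ P := by
  simp [sp]

theorem deg_P_v {P : Finset (Sym2 V)} (hP : P ⊆ s.E) (k : Fin 4) :
    deg P (s.v k) = if k ∈ s.sp P then 1 else 0 := by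
  have : P.filter (s.v k ∈ ·) = if k ∈ s.sp P then {s(s.v k, s.u k)} else ∅ := by
    ext e
    rw [Finset.mem_filter]
    split_ifs with h <;> rw [mem_sp] at h
    · rw [Finset.mem_singleton]
      constructor
      · rintro ⟨h1, h2⟩; exact s.hE e (hP h1) k h2
      · rintro rfl; exact ⟨h, by simp⟩
    · simp only [Finset.notMem_empty, iff_false]
      rintro ⟨h1, h2⟩
      exact h (s.hE e (hP h1) k h2 ▸ h1)
  unfold deg
  rw [this]
  split_ifs <;> simp

theorem rep {J₀ : Finset (Fin 4)} {K : Finset (Sym2 V)} (hK : K ⊆ s.E ∪ s.g J₀) :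
    ∃ J ⊆ J₀, K = s.glue (K ∩ s.E) J := by
  refine ⟨Finset.univ.filter (fun k => s.c k ∈ K), ?_, ?_⟩
  · intro k hk
    simp only [Finset.mem_filter, Finset.mem_univ, true_and] at hk
    rcases Finset.mem_union.1 (hK hk) with h | h
    · exact absurd h (s.c_notMem k)
    · exact s.mem_g.1 h
  · ext e
    by_cases he : e ∈ s.E
    · rw [s.mem_mk_E he]; simp [he]
    · simp only [glue, g, Finset.mem_union, Finset.mem_inter, he, and_false, false_or,
        Finset.mem_image, Finset.mem_filter, Finset.mem_univ, true_and]
      constructor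
      · intro h
        rcases Finset.mem_union.1 (hK h) with h' | h'
        · exact absurd h' he
        · simp only [g, Finset.mem_image] at h'
          obtain ⟨k, _, rfl⟩ := h'
          exact ⟨k, h, rfl⟩
      · rintro ⟨k, h, rfl⟩; exact h

/-- path (or circuit, if `I = ∅`) outside of the cycle using the spokes in `I` -/
def IsPth (I : Finset (Fin 4)) (P : Finset (Sym2 V)) : Prop :=
  P ⊆ s.E ∧ Conn P ∧ (∀ x, (∀ k, x ≠ s.v k) → deg P x = 0 ∨ deg P x = 2) ∧ s.sp P = I

/-- connected set of cycle edges -/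
def gconn (J : Finset (Fin 4)) : Prop := J ≠ ∅ ∧ ∀ X ∈ J.powerset, X = ∅ ∨ X = J ∨
  ∃ a ∈ X, ∃ b ∈ J, (b = a + 1 ∨ a = b + 1) ∧ b ∉ X

instance (J : Finset (Fin 4)) : Decidable (gconn J) := by unfold gconn; infer_instance

/-- degree condition -/
def okdeg (I J : Finset (Fin 4)) : Prop := ∀ k : Fin 4,
  (if k ∈ I then 1 else 0) + ((if k ∈ J then 1 else 0) + (if k - 1 ∈ J then 1 else 0)) = 0 ∨
  (if k ∈ I then 1 else 0) + ((if k ∈ J then 1 else 0) + (if k - 1 ∈ J then 1 else 0)) = 2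

instance (I J : Finset (Fin 4)) : Decidable (okdeg I J) := by unfold okdeg; infer_instance

theorem conn_g {J : Finset (Fin 4)} (h : gconn J) : Conn (s.g J) := by
  obtain ⟨h1, h2⟩ := h
  obtain ⟨k, hk⟩ := Finset.nonempty_iff_ne_empty.2 h1
  refine ⟨⟨s.c k, s.mem_g.2 hk⟩, fun X hX hn hcl => ?_⟩
  have hX' : X = s.g (J.filter (fun k => s.c k ∈ X)) := by
    ext e
    simp only [g, Finset.mem_image, Finset.mem_filter]
    constructor
    · intro he
      obtain ⟨k, hk, rfl⟩ := Finset.mem_image.1 (hX he)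
      exact ⟨k, ⟨hk, he⟩, rfl⟩
    · rintro ⟨k, ⟨_, h⟩, rfl⟩; exact h
  have := ((h2 (J.filter (fun k => s.c k ∈ X)) (Finset.mem_powerset.2 (Finset.filter_subset _ _))).resolve_left (by
    obtain ⟨e, he⟩ := hn
    obtain ⟨k, hk, rfl⟩ := Finset.mem_image.1 (hX he)
    exact Finset.nonempty_iff_ne_empty.1 ⟨k, by simp [hk, he]⟩)).resolve_right (by
    rintro ⟨a, ha, b, hb, hab, hnot⟩
    simp only [Finset.mem_filter] at ha hnot
    refine hnot ⟨hb, ?_⟩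
    rcases hab with rfl | rfl
    · exact hcl _ ha.2 _ (s.mem_g.2 hb) (s.v (a+1)) (by simp [c]) (by simp [c])
    · exact hcl _ ha.2 _ (s.mem_g.2 hb) (s.v (b+1)) (by simp [c]) (by simp [c]))
  rw [hX', this]

theorem circ_deg {P : Finset (Sym2 V)} (hP : P ⊆ s.E) {J : Finset (Fin 4)}
    (hd : ∀ x, (∀ k, x ≠ s.v k) → deg P x = 0 ∨ deg P x = 2) :
    (∀ x, deg (s.glue P J) x = 0 ∨ deg (s.glue P J) x = 2) ↔ okdeg (s.sp P) J := by
  constructor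
  · intro h k
    have := h (s.v k)
    rwa [s.deg_mk hP, s.deg_P_v hP, s.deg_g_v] at this
  · intro h x
    by_cases hx : ∃ k, x = s.v k
    · obtain ⟨k, rfl⟩ := hx
      have := h k
      rwa [s.deg_mk hP, s.deg_P_v hP, s.deg_g_v]
    · push Not at hx
      rw [s.deg_mk hP, s.deg_g_off J hx, add_zero]
      exact hd x hx

theorem circ_face : IsCirc (s.glue ∅ Finset.univ) := by
  refine ⟨?_, (s.circ_deg (by simp) (by simp [deg])).2 ?_⟩
  · rw [glue, Finset.empty_union]; exact s.conn_g (by decide)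
  · have : s.sp ∅ = ∅ := by simp [sp]
    rw [this]; decide

/-- vertex `k` lies on an edge of `J` -/
def touch (k : Fin 4) (J : Finset (Fin 4)) : Prop := k ∈ J ∨ k - 1 ∈ J
instance (k : Fin 4) (J : Finset (Fin 4)) : Decidable (touch k J) := by
  unfold touch; infer_instance

theorem touch_deg {k : Fin 4} {J : Finset (Fin 4)} (h : touch k J) :
    deg (s.g J) (s.v k) ≠ 0 := by
  rw [deg_g_v]
  rcases h with h | h <;> simp [h]

theorem IsPth.deg_v {s : Setup V} {I : Finset (Fin 4)} {P : Finset (Sym2 V)} (h : s.IsPth I P)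
    {k : Fin 4} (hk : k ∈ I) : deg P (s.v k) ≠ 0 := by
  rw [s.deg_P_v h.1, h.2.2.2]; simp [hk]

theorem circ1 {s : Setup V} {I J : Finset (Fin 4)} {P : Finset (Sym2 V)} (hP : s.IsPth I P)
    (k : Fin 4) (h : gconn J ∧ okdeg I J ∧ k ∈ I ∧ touch k J) : IsCirc (s.glue P J) := by
  refine ⟨hP.2.1.union (s.conn_g h.1) (s.v k) (hP.deg_v h.2.2.1) (s.touch_deg h.2.2.2),
    (s.circ_deg hP.1 hP.2.2.1).2 ?_⟩
  rw [hP.2.2.2]; exact h.2.1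

theorem circ0 {s : Setup V} {P : Finset (Sym2 V)} (hP : s.IsPth ∅ P) : IsCirc P := by
  have h := (s.circ_deg (J := ∅) hP.1 hP.2.2.1).2 (by rw [hP.2.2.2]; decide)
  have : s.glue P ∅ = P := by simp [glue, g]
  rw [this] at h
  exact ⟨hP.2.1, h⟩

theorem sp_union (P Q : Finset (Sym2 V)) : s.sp (P ∪ Q) = s.sp P ∪ s.sp Q := by
  ext k; simp [mem_sp]

theorem circ2 {s : Setup V} {I I' : Finset (Fin 4)} (J₁ J₂ : Finset (Fin 4))
    {P P' : Finset (Sym2 V)} (hP : s.IsPth I P) (hP' : s.IsPth I' P') (hd : Dj P P')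
    (k₁ k₂ k₃ : Fin 4) (h : gconn J₁ ∧ gconn J₂ ∧ okdeg (I ∪ I') (J₁ ∪ J₂) ∧
      k₁ ∈ I ∧ touch k₁ J₁ ∧ k₂ ∈ I' ∧ touch k₂ J₁ ∧ k₃ ∈ I ∧ touch k₃ J₂) :
    IsCirc (s.glue (P ∪ P') (J₁ ∪ J₂)) := by
  obtain ⟨g1, g2, hok, a1, a2, b1, b2, c1, c2⟩ := h
  have hsub : P ∪ P' ⊆ s.E := Finset.union_subset hP.1 hP'.1
  refine ⟨?_, (s.circ_deg hsub ?_).2 ?_⟩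
  · have h1 := hP.2.1.union (s.conn_g g1) (s.v k₁) (hP.deg_v a1) (s.touch_deg a2)
    have h2 := h1.union hP'.2.1 (s.v k₂)
      (by rw [deg_union (s.g_disj _ hP.1)]; have := s.touch_deg b2; omega) (hP'.deg_v b1)
    have h3 := h2.union (s.conn_g g2) (s.v k₃)
      (by have := deg_mono (P := P) (Q := P ∪ s.g J₁ ∪ P') (by
            intro x hx; simp [hx]) (s.v k₃)
          have := hP.deg_v c1; omega) (s.touch_deg c2)
    convert h3 using 1
    simp only [glue, g, Finset.image_union]
    ext e; simp only [Finset.mem_union]; tauto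
  · intro x hx
    rw [deg_union hd.disjoint]
    have h1 := hP.2.2.1 x hx
    have h2 := hP'.2.2.1 x hx
    by_cases h3 : deg P x = 0
    · simpa [h3] using h2
    · have : deg P' x = 0 := by
        rw [deg_eq_zero] at h3 ⊢
        push Not at h3
        obtain ⟨a, ha, hxa⟩ := h3
        intro b hb hxb
        exact hd a ha b hb x hxa hxb
      simpa [this] using h1
  · rw [sp_union, hP.2.2.2, hP'.2.2.2]; exact hok

/-- circuit double covers of `E` together with the cycle edges in `J₀` -/
def IsDC (J₀ : Finset (Fin 4)) (C : Multiset (Finset (Sym2 V))) : Prop :=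
  (∀ K ∈ C, IsCirc K ∧ K ⊆ s.E ∪ s.g J₀) ∧ ∀ e ∈ s.E ∪ s.g J₀, cov C e = 2

/-- trace outside of the cycle -/
noncomputable def tr (C : Multiset (Finset (Sym2 V))) : Multiset (Finset (Sym2 V)) :=
  C.bind (fun K => (comps (K ∩ s.E)).val)

theorem tr_add (C D : Multiset (Finset (Sym2 V))) : s.tr (C + D) = s.tr C + s.tr D := by
  simp [tr]

theorem tr_cons (K : Finset (Sym2 V)) (C : Multiset (Finset (Sym2 V))) :
    s.tr (K ::ₘ C) = (comps (K ∩ s.E)).val + s.tr C := by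
  simp [tr]

theorem cov_tr (C : Multiset (Finset (Sym2 V))) {e : Sym2 V} (he : e ∈ s.E) :
    cov (s.tr C) e = cov C e := by
  induction C using Multiset.induction_on with
  | empty => rfl
  | cons K C ih =>
    rw [tr_cons, cov_add, ih, cov_comps, cov_cons]
    simp [he, add_comm]

theorem tr_pth {C : Multiset (Finset (Sym2 V))} (h : ∀ K ∈ C, s.IsPth ∅ K) : s.tr C = C := by
  unfold tr
  have : C.bind (fun K => (comps (K ∩ s.E)).val) = C.bind (fun K => {K}) := by
    apply Multiset.bind_congr
    intro K hK
    rw [Finset.inter_eq_left.2 (h K hK).1, comps_conn (h K hK).2.1]; rfl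
  rw [this, Multiset.bind_singleton, Multiset.map_id']

theorem cov_pos {C : Multiset (Finset (Sym2 V))} {e : Sym2 V} (h : 0 < cov C e) :
    ∃ K ∈ C, e ∈ K := by
  simpa [cov, Multiset.countP_pos] using h

section Fin
variable [Fintype V]

theorem finite_DC (J₀ : Finset (Fin 4)) : {C | s.IsDC J₀ C}.Finite := by
  refine (Set.finite_Iic (2 • (Finset.univ : Finset (Finset (Sym2 V))).val)).subset ?_
  intro C hC
  rw [Set.mem_Iic, Multiset.le_iff_count]
  intro K
  rw [Multiset.count_nsmul, Multiset.count_univ]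
  by_cases hK : K ∈ C
  · obtain ⟨e, he⟩ := (hC.1 K hK).1.1.1
    have h2 := hC.2 e ((hC.1 K hK).2 he)
    rw [← h2, mul_one]
    unfold cov
    rw [Multiset.count]
    rw [Multiset.countP_eq_card_filter, Multiset.countP_eq_card_filter]
    apply Multiset.card_le_card
    apply Multiset.monotone_filter_right
    rintro b rfl; exact he
  · simp [hK]

/-- finset of all double covers -/
noncomputable def N (J₀ : Finset (Fin 4)) : Finset (Multiset (Finset (Sym2 V))) :=
  (s.finite_DC J₀).toFinset

theorem mem_N {J₀ : Finset (Fin 4)} {C : Multiset (Finset (Sym2 V))} : C ∈ s.N J₀ ↔ s.IsDC J₀ C := by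
  simp [N]

/-- fibers of the trace -/
noncomputable def F (J₀ : Finset (Fin 4)) (T : Multiset (Finset (Sym2 V))) :
    Finset (Multiset (Finset (Sym2 V))) := (s.N J₀).filter (fun C => s.tr C = T)

theorem mem_F {J₀ : Finset (Fin 4)} {T C : Multiset (Finset (Sym2 V))} :
    C ∈ s.F J₀ T ↔ s.IsDC J₀ C ∧ s.tr C = T := by
  simp [F, mem_N]

theorem build {T F : Multiset (Finset (Sym2 V))} (hcov : ∀ e ∈ s.E, cov T e = 2)
    (hF : ∀ K ∈ F, s.IsPth ∅ K) (L : Multiset (Finset (Sym2 V) × Finset (Fin 4)))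
    (hL : ∀ p ∈ L, p.1 ⊆ s.E ∧ IsCirc (s.glue p.1 p.2))
    (hg : ∀ k, (L.map Prod.snd).countP (fun J => k ∈ J) = 2)
    (hT : T = F + L.bind (fun p => (comps p.1).val)) :
    F + L.map (fun p => s.glue p.1 p.2) ∈ s.F Finset.univ T := by
  have htr : s.tr (F + L.map (fun p => s.glue p.1 p.2)) = T := by
    rw [tr_add, s.tr_pth hF, hT]
    congr 1
    unfold tr
    rw [Multiset.bind_map]
    apply Multiset.bind_congr
    intro p hp
    rw [s.mk_inter (hL p hp).1]
  rw [mem_F]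
  refine ⟨⟨?_, ?_⟩, htr⟩
  · intro K hK
    rw [Multiset.mem_add, Multiset.mem_map] at hK
    rcases hK with hK | ⟨p, hp, rfl⟩
    · exact ⟨circ0 (hF K hK), (hF K hK).1.trans Finset.subset_union_left⟩
    · exact ⟨(hL p hp).2, Finset.union_subset_union (hL p hp).1
        (Finset.image_subset_image (Finset.subset_univ _))⟩
  · intro e he
    by_cases heE : e ∈ s.E
    · rw [← s.cov_tr _ heE, htr, hcov e heE]
    · have := (Finset.mem_union.1 he).resolve_left heE
      obtain ⟨k, -, rfl⟩ := Finset.mem_image.1 this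
      rw [cov_add]
      have h0 : cov F (s.c k) = 0 := by
        by_contra h
        obtain ⟨K, hK, h'⟩ := cov_pos (Nat.pos_of_ne_zero h)
        exact heE ((hF K hK).1 h')
      rw [h0, zero_add, ← hg k, cov, Multiset.countP_map, Multiset.countP_map]
      congr 1
      apply Multiset.filter_congr
      intro p hp
      exact s.mem_mk_c (hL p hp).1
end Fin
end Setup
end Core2

section Core3
set_option linter.unusedSectionVars false
set_option linter.unusedSimpArgs false
variable {V : Type*} [DecidableEq V]
namespace Setup
variable (s : Setup V)

theorem comps_dj {S X Y : Finset (Sym2 V)} (hX : X ∈ comps S) (hY : Y ∈ comps S) (h : X ≠ Y) :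
    Dj X Y := by
  intro c hc d hd x h1 h2
  exact h (comps_unique hX hY ((mem_comps.1 hX).2.1 c hc d ((mem_comps.1 hY).1 hd) x h1 h2) hd)

theorem circ_cut {P : Finset (Sym2 V)} (hP : P ⊆ s.E) {J : Finset (Fin 4)}
    (hK : IsCirc (s.glue P J)) :
    (∀ x, (∀ k, x ≠ s.v k) → deg P x = 0 ∨ deg P x = 2) ∧ okdeg (s.sp P) J := by
  have h1 : ∀ x, (∀ k, x ≠ s.v k) → deg P x = 0 ∨ deg P x = 2 := by
    intro x hx
    have := hK.2 x
    rwa [s.deg_mk hP, s.deg_g_off J hx, add_zero] at this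
  exact ⟨h1, (s.circ_deg hP h1).1 hK.2⟩

theorem cut_empty {P : Finset (Sym2 V)} (hP : P ⊆ s.E) {J : Finset (Fin 4)}
    (hK : IsCirc (s.glue P J)) {k : Fin 4} (hJ : k ∈ J) {Y : Finset (Sym2 V)} (hY : Y ⊆ P)
    (hcl : Closed Y P) (hsp : s.sp Y = ∅) : Y = ∅ := by
  by_contra hne
  have hcl' : Closed Y (s.glue P J) := by
    intro c hc d hd x h1 h2
    rcases Finset.mem_union.1 hd with hd | hd
    · exact hcl c hc d hd x h1 h2
    · exfalso
      obtain ⟨k, _, rfl⟩ := Finset.mem_image.1 hd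
      have : ∃ j, x = s.v j := by
        simp only [Setup.c, Sym2.mem_iff] at h2
        rcases h2 with h2 | h2 <;> exact ⟨_, h2⟩
      obtain ⟨j, rfl⟩ := this
      have h3 := s.hE c (hP (hY hc)) j h1
      have : j ∈ s.sp Y := s.mem_sp.2 (h3 ▸ hc)
      simp [hsp] at this
  have h := hK.1.2 Y (hY.trans Finset.subset_union_left) (Finset.nonempty_iff_ne_empty.2 hne) hcl'
  have h2 : s.c k ∈ s.glue P J := (s.mem_mk_c hP).2 hJ
  rw [← h] at h2
  exact s.c_notMem k (hP (hY h2))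

/-- component of `P` starting at the spoke `i` -/
theorem cut_path {P : Finset (Sym2 V)} (hP : P ⊆ s.E)
    (hd : ∀ x, (∀ k, x ≠ s.v k) → deg P x = 0 ∨ deg P x = 2) {i : Fin 4} (hi : i ∈ s.sp P) :
    ∃ X ∈ comps P, ∃ j, j ≠ i ∧ j ∈ s.sp P ∧ s.IsPth {i, j} X := by
  have hvd : ∀ k, deg P (s.v k) = 1 ↔ k ∈ s.sp P := by
    intro k; rw [s.deg_P_v hP]; simp
  obtain ⟨X, hX, w, hw, hw1, hcl, hc, ha, hb, ho⟩ := path_comp _ P rfl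
    (fun e he => s.noloop e (hP he)) (by
      intro x
      by_cases hx : ∃ k, x = s.v k
      · obtain ⟨k, rfl⟩ := hx
        rw [s.deg_P_v hP]; split_ifs <;> simp
      · push Not at hx
        have := hd x hx; omega) (s.v i) ((hvd i).2 hi)
  have : ∃ j, w = s.v j := by
    by_contra hx
    push Not at hx
    have := hd w hx; omega
  obtain ⟨j, rfl⟩ := this
  have hXE := hX.trans hP
  have hvd' : ∀ k, deg X (s.v k) = 1 ↔ k ∈ s.sp X := by
    intro k; rw [s.deg_P_v hXE]; simp
  refine ⟨X, mem_comps.2 ⟨hX, hcl, hc⟩, j, fun h => hw (by rw [h]), (hvd j).1 hw1, hXE, hc, ?_, ?_⟩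
  · intro x hx
    rcases deg_closed hX hcl x with h | h
    · exact Or.inl h
    · rw [h]; exact hd x hx
  · ext k
    rw [← hvd']
    simp only [Finset.mem_insert, Finset.mem_singleton]
    constructor
    · intro h
      by_contra hk
      push Not at hk
      have := ho (s.v k) (by
        rw [hvd, s.mem_sp]
        exact hX (s.mem_sp.1 ((hvd' k).1 h))) (fun h => hk.1 (s.v_inj h)) (fun h => hk.2 (s.v_inj h))
      omega
    · rintro (rfl | rfl) <;> assumption

theorem sp_sdiff (P X : Finset (Sym2 V)) : s.sp (P \ X) = s.sp P \ s.sp X := by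
  ext k; simp [mem_sp]

theorem cut1 {P : Finset (Sym2 V)} (hP : P ⊆ s.E) {J : Finset (Fin 4)}
    (hK : IsCirc (s.glue P J)) {k : Fin 4} (hJ : k ∈ J) {i j : Fin 4} (hsp : s.sp P = {i, j}) :
    s.IsPth {i, j} P := by
  have hd := (s.circ_cut hP hK).1
  obtain ⟨X, hX, l, hl, hl', hXp⟩ := s.cut_path hP hd (i := i) (by simp [hsp])
  have hlj : l = j := by
    rw [hsp] at hl'; simp [hl] at hl'; exact hl'
  subst hlj
  have hX' := mem_comps.1 hX
  have := s.cut_empty hP hK hJ (Y := P \ X) Finset.sdiff_subset hX'.2.1.sdiff (by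
    rw [sp_sdiff, hsp, hXp.2.2.2]; simp)
  rw [Finset.sdiff_eq_empty_iff_subset] at this
  have h := Finset.Subset.antisymm hX'.1 this
  rwa [← h]

theorem cut2 {P : Finset (Sym2 V)} (hP : P ⊆ s.E)
    (hK : IsCirc (s.glue P {1, 3})) : ∃ X Y, Dj X Y ∧ P = X ∪ Y ∧
    ((s.IsPth {0, 1} X ∧ s.IsPth {2, 3} Y) ∨ (s.IsPth {0, 2} X ∧ s.IsPth {1, 3} Y)) := by
  have hd := (s.circ_cut hP hK).1
  have hsp : s.sp P = Finset.univ := by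
    have := (s.circ_cut hP hK).2
    generalize s.sp P = I at this
    revert I; decide
  obtain ⟨X, hX, k, hk, -, hXp⟩ := s.cut_path hP hd (i := 0) (by simp [hsp])
  have hX' := mem_comps.1 hX
  have hk3 : k ≠ 3 := by
    rintro rfl
    have hcl : Closed (s.glue X {3}) (s.glue P {1, 3}) := by
      have hsX : ∀ m, m = 0 ∨ m = 3 → s(s.v m, s.u m) ∈ X := by
        intro m hm
        rw [← s.mem_sp, hXp.2.2.2]
        rcases hm with rfl | rfl <;> simp
      intro c hc d hd x h1 h2
      rcases Finset.mem_union.1 hc with hc | hc <;> rcases Finset.mem_union.1 hd with hd | hd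
      · exact Finset.mem_union_left _ (hX'.2.1 c hc d hd x h1 h2)
      · obtain ⟨m, hm, rfl⟩ := Finset.mem_image.1 hd
        have hx : ∃ j, x = s.v j := by
          simp only [Setup.c, Sym2.mem_iff] at h2
          rcases h2 with h2 | h2 <;> exact ⟨_, h2⟩
        obtain ⟨j, rfl⟩ := hx
        have hj : j ∈ s.sp X := s.mem_sp.2 (s.hE c (hXp.1 hc) j h1 ▸ hc)
        rw [hXp.2.2.2] at hj
        rw [s.v_mem_c] at h2
        rw [s.mem_mk_c hXp.1]
        clear * - hm h2 hj
        revert m j; decide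
      · obtain ⟨m, hm, rfl⟩ := Finset.mem_image.1 hc
        rw [Finset.mem_singleton] at hm
        subst hm
        have hx : ∃ j, x = s.v j := by
          simp only [Setup.c, Sym2.mem_iff] at h1
          rcases h1 with h2 | h2 <;> exact ⟨_, h2⟩
        obtain ⟨j, rfl⟩ := hx
        rw [s.v_mem_c] at h1
        rw [s.hE d (hP hd) j h2]
        exact Finset.mem_union_left _ (hsX j (by clear hc h2; revert j; decide))
      · obtain ⟨m, hm, rfl⟩ := Finset.mem_image.1 hc
        obtain ⟨n, hn, rfl⟩ := Finset.mem_image.1 hd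
        have hx : ∃ j, x = s.v j := by
          simp only [Setup.c, Sym2.mem_iff] at h1
          rcases h1 with h2 | h2 <;> exact ⟨_, h2⟩
        obtain ⟨j, rfl⟩ := hx
        rw [s.v_mem_c] at h1 h2
        rw [s.mem_mk_c hXp.1]
        clear * - hm hn h1 h2
        revert m n j; decide
    have h := hK.1.2 (s.glue X {3})
      (Finset.union_subset_union hX'.1 (Finset.image_subset_image (by decide)))
      (hX'.2.2.1.mono Finset.subset_union_left) hcl
    have h2 : s.c 1 ∈ s.glue P {1, 3} := (s.mem_mk_c hP).2 (by decide)
    rw [← h, s.mem_mk_c hXp.1] at h2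
    revert h2; decide
  have key : ∀ j, j ∉ ({0, k} : Finset (Fin 4)) → ∀ l, (∀ m, m ∉ ({0, k} : Finset (Fin 4)) → m ≠ j → m = l) →
      ({0, k, j, l} : Finset (Fin 4)) = Finset.univ →
      ∃ Y, Dj X Y ∧ P = X ∪ Y ∧ s.IsPth {j, l} Y := by
    intro j hj l hl hu
    obtain ⟨Y, hY, m, hm, -, hYp⟩ := s.cut_path hP hd (i := j) (by simp [hsp])
    have hY' := mem_comps.1 hY
    have hne : X ≠ Y := by
      rintro rfl
      have := hYp.2.2.2
      rw [hXp.2.2.2] at this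
      rw [this] at hj; simp at hj
    have hdj := comps_dj hX hY hne
    have hmX : m ∉ ({0, k} : Finset (Fin 4)) := by
      rw [← hXp.2.2.2, s.mem_sp]
      intro h
      have h2 : m ∈ s.sp Y := by rw [hYp.2.2.2]; simp
      rw [s.mem_sp] at h2
      exact Finset.disjoint_left.1 hdj.disjoint h h2
    have hml := hl m hmX hm
    subst hml
    refine ⟨Y, hdj, ?_, hYp⟩
    have hcl : Closed (X ∪ Y) P := by
      intro c hc d hd x h1 h2
      rw [Finset.mem_union] at hc ⊢
      rcases hc with hc | hc
      · exact Or.inl (hX'.2.1 c hc d hd x h1 h2)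
      · exact Or.inr (hY'.2.1 c hc d hd x h1 h2)
    have := s.cut_empty hP hK (k := 1) (by decide) (Y := P \ (X ∪ Y)) Finset.sdiff_subset hcl.sdiff (by
      rw [sp_sdiff, hsp, sp_union, hXp.2.2.2, hYp.2.2.2, Finset.sdiff_eq_empty_iff_subset, ← hu]
      intro a; simp; tauto)
    rw [Finset.sdiff_eq_empty_iff_subset] at this
    exact Finset.Subset.antisymm this (Finset.union_subset hX'.1 hY'.1)
  have hk12 : k = 1 ∨ k = 2 := by
    clear key hXp; revert k; decide
  rcases hk12 with rfl | rfl
  · obtain ⟨Y, h1, h2, h3⟩ := key 2 (by decide) 3 (by decide) (by decide)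
    exact ⟨X, Y, h1, h2, Or.inl ⟨hXp, h3⟩⟩
  · obtain ⟨Y, h1, h2, h3⟩ := key 1 (by decide) 3 (by decide) (by decide)
    exact ⟨X, Y, h1, h2, Or.inr ⟨hXp, h3⟩⟩

/-- the possible shapes of a double cover of the first reduction, with its trace -/
inductive Ext (s : Setup V) : Multiset (Finset (Sym2 V)) → Multiset (Finset (Sym2 V)) → Prop
  | al (F : Multiset (Finset (Sym2 V))) (P P' Q Q' : Finset (Sym2 V)) (hF : ∀ K ∈ F, s.IsPth ∅ K)
    (hP : s.IsPth {0, 3} P) (hP' : s.IsPth {0, 3} P') (hQ : s.IsPth {1, 2} Q)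
    (hQ' : s.IsPth {1, 2} Q') :
    Ext s (F + {s.glue P {3}, s.glue P' {3}, s.glue Q {1}, s.glue Q' {1}}) (F + {P, P', Q, Q'})
  | be (F : Multiset (Finset (Sym2 V))) (P Q X Y : Finset (Sym2 V)) (hF : ∀ K ∈ F, s.IsPth ∅ K)
    (hP : s.IsPth {0, 3} P) (hQ : s.IsPth {1, 2} Q) (hX : s.IsPth {0, 1} X)
    (hY : s.IsPth {2, 3} Y) (hd : Dj X Y) :
    Ext s (F + {s.glue P {3}, s.glue Q {1}, s.glue (X ∪ Y) {1, 3}}) (F + {P, Q, X, Y})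
  | ga (F : Multiset (Finset (Sym2 V))) (P Q X Y : Finset (Sym2 V)) (hF : ∀ K ∈ F, s.IsPth ∅ K)
    (hP : s.IsPth {0, 3} P) (hQ : s.IsPth {1, 2} Q) (hX : s.IsPth {0, 2} X)
    (hY : s.IsPth {1, 3} Y) (hd : Dj X Y) :
    Ext s (F + {s.glue P {3}, s.glue Q {1}, s.glue (X ∪ Y) {1, 3}}) (F + {P, Q, X, Y})
  | al' (F : Multiset (Finset (Sym2 V))) (X Y X' Y' : Finset (Sym2 V)) (hF : ∀ K ∈ F, s.IsPth ∅ K)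
    (hX : s.IsPth {0, 1} X) (hY : s.IsPth {2, 3} Y) (hX' : s.IsPth {0, 1} X')
    (hY' : s.IsPth {2, 3} Y') (hd : Dj X Y) (hd' : Dj X' Y') :
    Ext s (F + {s.glue (X ∪ Y) {1, 3}, s.glue (X' ∪ Y') {1, 3}}) (F + {X, Y, X', Y'})
  | ga' (F : Multiset (Finset (Sym2 V))) (X Y X' Y' : Finset (Sym2 V)) (hF : ∀ K ∈ F, s.IsPth ∅ K)
    (hX : s.IsPth {0, 1} X) (hY : s.IsPth {2, 3} Y) (hX' : s.IsPth {0, 2} X')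
    (hY' : s.IsPth {1, 3} Y') (hd : Dj X Y) (hd' : Dj X' Y') :
    Ext s (F + {s.glue (X ∪ Y) {1, 3}, s.glue (X' ∪ Y') {1, 3}}) (F + {X, Y, X', Y'})
  | de (F : Multiset (Finset (Sym2 V))) (X Y X' Y' : Finset (Sym2 V)) (hF : ∀ K ∈ F, s.IsPth ∅ K)
    (hX : s.IsPth {0, 2} X) (hY : s.IsPth {1, 3} Y) (hX' : s.IsPth {0, 2} X')
    (hY' : s.IsPth {1, 3} Y') (hd : Dj X Y) (hd' : Dj X' Y') :
    Ext s (F + {s.glue (X ∪ Y) {1, 3}, s.glue (X' ∪ Y') {1, 3}}) (F + {X, Y, X', Y'})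

theorem tr_one {P : Finset (Sym2 V)} {I : Finset (Fin 4)} (hP : s.IsPth I P) (J : Finset (Fin 4)) :
    (comps (s.glue P J ∩ s.E)).val = {P} := by
  rw [s.mk_inter hP.1, comps_conn hP.2.1]; rfl

theorem tr_two {P Q : Finset (Sym2 V)} {I I' : Finset (Fin 4)} (hP : s.IsPth I P)
    (hQ : s.IsPth I' Q) (hd : Dj P Q) (J : Finset (Fin 4)) :
    (comps (s.glue (P ∪ Q) J ∩ s.E)).val = {P, Q} := by
  rw [s.mk_inter (Finset.union_subset hP.1 hQ.1), comps_two hP.2.1 hQ.2.1 hd]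
  have : P ≠ Q := by
    rintro rfl
    obtain ⟨e, he⟩ := hP.2.1.1
    exact Finset.disjoint_left.1 hd.disjoint he he
  rw [Finset.insert_val_of_notMem (by simpa using this)]
  rfl

theorem tr_zero : s.tr 0 = 0 := rfl

theorem ext1 {D : Multiset (Finset (Sym2 V))} (hD : s.IsDC {1, 3} D) : Ext s D (s.tr D) := by
  have hrep : ∀ K ∈ D, ∃ P J, P ⊆ s.E ∧ J ⊆ {1, 3} ∧ K = s.glue P J ∧ IsCirc (s.glue P J) := by
    intro K hK
    obtain ⟨J, hJ, h⟩ := s.rep (hD.1 K hK).2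
    exact ⟨_, J, Finset.inter_subset_right, hJ, h, h ▸ (hD.1 K hK).1⟩
  have hJJ : ∀ J : Finset (Fin 4), J ⊆ {1, 3} → J = ∅ ∨ J = {1} ∨ J = {3} ∨ J = {1, 3} := by decide
  have hA : ∀ K ∈ D, s.c 3 ∈ K → s.c 1 ∉ K → ∃ P, s.IsPth {0, 3} P ∧ K = s.glue P {3} := by
    intro K hK h3 h1
    obtain ⟨P, J, hP, hJ, rfl, hc⟩ := hrep K hK
    rw [s.mem_mk_c hP] at h3 h1
    have : J = {3} := by clear hrep hK hc; revert J; decide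
    subst this
    refine ⟨P, s.cut1 hP hc (k := 3) (by decide) ?_, rfl⟩
    have := (s.circ_cut hP hc).2
    generalize s.sp P = I at this
    revert I; decide
  have hB : ∀ K ∈ D, s.c 1 ∈ K → s.c 3 ∉ K → ∃ P, s.IsPth {1, 2} P ∧ K = s.glue P {1} := by
    intro K hK h3 h1
    obtain ⟨P, J, hP, hJ, rfl, hc⟩ := hrep K hK
    rw [s.mem_mk_c hP] at h3 h1
    have : J = {1} := by clear hrep hK hc; revert J; decide
    subst this
    refine ⟨P, s.cut1 hP hc (k := 1) (by decide) ?_, rfl⟩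
    have := (s.circ_cut hP hc).2
    generalize s.sp P = I at this
    revert I; decide
  have hM : ∀ K ∈ D, s.c 1 ∈ K → s.c 3 ∈ K → ∃ X Y, Dj X Y ∧ K = s.glue (X ∪ Y) {1, 3} ∧
    ((s.IsPth {0, 1} X ∧ s.IsPth {2, 3} Y) ∨ (s.IsPth {0, 2} X ∧ s.IsPth {1, 3} Y)) := by
    intro K hK h3 h1
    obtain ⟨P, J, hP, hJ, rfl, hc⟩ := hrep K hK
    rw [s.mem_mk_c hP] at h3 h1
    have : J = {1, 3} := by clear hrep hK hc; revert J; decide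
    subst this
    obtain ⟨X, Y, h1, rfl, h2⟩ := s.cut2 hP hc
    exact ⟨X, Y, h1, rfl, h2⟩
  have hFF : ∀ K ∈ D, s.c 1 ∉ K → s.c 3 ∉ K → s.IsPth ∅ K := by
    intro K hK h3 h1
    obtain ⟨P, J, hP, hJ, rfl, hc⟩ := hrep K hK
    rw [s.mem_mk_c hP] at h3 h1
    have : J = ∅ := by clear hrep hK hc; revert J; decide
    subst this
    have h := s.circ_cut hP hc
    have h' : s.glue P ∅ = P := by simp [glue, g]
    rw [h'] at hc ⊢
    refine ⟨hP, hc.1, h.1, ?_⟩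
    have := h.2
    generalize s.sp P = I at this
    revert I; decide
  have c1 : cov D (s.c 1) = 2 := hD.2 _ (Finset.mem_union_right _ (s.mem_g.2 (by decide)))
  have c3 : cov D (s.c 3) = 2 := hD.2 _ (Finset.mem_union_right _ (s.mem_g.2 (by decide)))
  -- split `D`
  obtain ⟨F, A, B, M, hDeq, hF, hA, hB, hM⟩ : ∃ F A B M : Multiset (Finset (Sym2 V)),
      D = F + (A + (B + M)) ∧ (∀ K ∈ F, K ∈ D ∧ s.c 1 ∉ K ∧ s.c 3 ∉ K) ∧
      (∀ K ∈ A, K ∈ D ∧ s.c 1 ∉ K ∧ s.c 3 ∈ K) ∧ (∀ K ∈ B, K ∈ D ∧ s.c 1 ∈ K ∧ s.c 3 ∉ K) ∧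
      (∀ K ∈ M, K ∈ D ∧ s.c 1 ∈ K ∧ s.c 3 ∈ K) := by
    refine ⟨(D.filter (s.c 1 ∉ ·)).filter (s.c 3 ∉ ·), (D.filter (s.c 1 ∉ ·)).filter (s.c 3 ∈ ·),
      (D.filter (s.c 1 ∈ ·)).filter (s.c 3 ∉ ·), (D.filter (s.c 1 ∈ ·)).filter (s.c 3 ∈ ·),
      ?_, ?_, ?_, ?_, ?_⟩
    · have e1 := Multiset.filter_add_not (s.c 3 ∈ ·) (D.filter (s.c 1 ∈ ·))
      have e2 := Multiset.filter_add_not (s.c 3 ∈ ·) (D.filter (s.c 1 ∉ ·))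
      have e3 := Multiset.filter_add_not (s.c 1 ∈ ·) D
      conv_lhs => rw [← e3, ← e1, ← e2]
      abel
    all_goals
      intro K hK
      simp only [Multiset.mem_filter] at hK
      tauto
  have cnt : ∀ (C : Multiset (Finset (Sym2 V))) e, (∀ K ∈ C, e ∈ K) → cov C e = C.card := by
    intro C e h; exact Multiset.countP_eq_card.2 h
  have cnt0 : ∀ (C : Multiset (Finset (Sym2 V))) e, (∀ K ∈ C, e ∉ K) → cov C e = 0 := by
    intro C e h; exact Multiset.countP_eq_zero.2 h
  rw [hDeq, cov_add, cov_add, cov_add] at c1 c3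
  rw [cnt0 F _ fun K h => (hF K h).2.1, cnt0 A _ fun K h => (hA K h).2.1,
    cnt B _ fun K h => (hB K h).2.1, cnt M _ fun K h => (hM K h).2.1] at c1
  rw [cnt0 F _ fun K h => (hF K h).2.2, cnt A _ fun K h => (hA K h).2.2,
    cnt0 B _ fun K h => (hB K h).2.2, cnt M _ fun K h => (hM K h).2.2] at c3
  have hF' : ∀ K ∈ F, s.IsPth ∅ K := fun K h => hFF K (hF K h).1 (hF K h).2.1 (hF K h).2.2
  have hA' := fun K (h : K ∈ A) => ‹∀ K ∈ D, s.c 3 ∈ K → s.c 1 ∉ K → _› K (hA K h).1 (hA K h).2.2 (hA K h).2.1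
  have hB' := fun K (h : K ∈ B) => ‹∀ K ∈ D, s.c 1 ∈ K → s.c 3 ∉ K → _› K (hB K h).1 (hB K h).2.1 (hB K h).2.2
  have hM' := fun K (h : K ∈ M) => ‹∀ K ∈ D, s.c 1 ∈ K → s.c 3 ∈ K → _› K (hM K h).1 (hM K h).2.1 (hM K h).2.2
  rw [hDeq, tr_add, s.tr_pth hF']
  clear hDeq hD hrep hF hA hB hM hFF
  have hm : M.card = 0 ∨ M.card = 1 ∨ M.card = 2 := by omega
  rcases hm with hm | hm | hm
  · rw [hm] at c1 c3
    obtain ⟨P, P', rfl⟩ := Multiset.card_eq_two.1 (show A.card = 2 by omega)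
    obtain ⟨Q, Q', rfl⟩ := Multiset.card_eq_two.1 (show B.card = 2 by omega)
    rw [Multiset.card_eq_zero] at hm
    subst hm
    obtain ⟨P, hP, rfl⟩ := hA' P (by simp)
    obtain ⟨P', hP', rfl⟩ := hA' P' (by simp)
    obtain ⟨Q, hQ, rfl⟩ := hB' Q (by simp)
    obtain ⟨Q', hQ', rfl⟩ := hB' Q' (by simp)
    have := Ext.al F P P' Q Q' hF' hP hP' hQ hQ'
    convert this using 2 <;>
    simp only [Multiset.insert_eq_cons, ← Multiset.cons_zero, tr_add, tr_cons, tr_zero, s.tr_one hP, s.tr_one hP', s.tr_one hQ,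
      s.tr_one hQ', Multiset.singleton_add, Multiset.cons_add, zero_add, add_zero]
  · rw [hm] at c1 c3
    obtain ⟨P, rfl⟩ := Multiset.card_eq_one.1 (show A.card = 1 by omega)
    obtain ⟨Q, rfl⟩ := Multiset.card_eq_one.1 (show B.card = 1 by omega)
    obtain ⟨K, rfl⟩ := Multiset.card_eq_one.1 hm
    obtain ⟨P, hP, rfl⟩ := hA' P (by simp)
    obtain ⟨Q, hQ, rfl⟩ := hB' Q (by simp)
    obtain ⟨X, Y, hd, rfl, ⟨hX, hY⟩ | ⟨hX, hY⟩⟩ := hM' K (by simp)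
    · have := Ext.be F P Q X Y hF' hP hQ hX hY hd
      convert this using 2 <;>
      simp only [Multiset.insert_eq_cons, ← Multiset.cons_zero, tr_add, tr_cons, tr_zero, s.tr_one hP, s.tr_one hQ,
        s.tr_two hX hY hd, Multiset.singleton_add, Multiset.cons_add, zero_add, add_zero]
    · have := Ext.ga F P Q X Y hF' hP hQ hX hY hd
      convert this using 2 <;>
      simp only [Multiset.insert_eq_cons, ← Multiset.cons_zero, tr_add, tr_cons, tr_zero, s.tr_one hP, s.tr_one hQ,
        s.tr_two hX hY hd, Multiset.singleton_add, Multiset.cons_add, zero_add, add_zero]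
  · rw [hm] at c1 c3
    obtain rfl := Multiset.card_eq_zero.1 (show A.card = 0 by omega)
    obtain rfl := Multiset.card_eq_zero.1 (show B.card = 0 by omega)
    obtain ⟨K, L, rfl⟩ := Multiset.card_eq_two.1 hm
    obtain ⟨X, Y, hd, rfl, hXY⟩ := hM' K (by simp)
    obtain ⟨X', Y', hd', rfl, hXY'⟩ := hM' L (by simp)
    rcases hXY with ⟨hX, hY⟩ | ⟨hX, hY⟩ <;> rcases hXY' with ⟨hX', hY'⟩ | ⟨hX', hY'⟩
    · convert Ext.al' F X Y X' Y' hF' hX hY hX' hY' hd hd' using 2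
      · simp
      simp only [Multiset.insert_eq_cons, ← Multiset.cons_zero, tr_add, tr_cons, tr_zero, s.tr_two hX' hY' hd',
        s.tr_two hX hY hd, Multiset.singleton_add, Multiset.cons_add, zero_add, add_zero]
    · convert Ext.ga' F X Y X' Y' hF' hX hY hX' hY' hd hd' using 2
      · simp
      simp only [Multiset.insert_eq_cons, ← Multiset.cons_zero, tr_add, tr_cons, tr_zero, s.tr_two hX' hY' hd',
        s.tr_two hX hY hd, Multiset.singleton_add, Multiset.cons_add, zero_add, add_zero]
    · convert Ext.ga' F X' Y' X Y hF' hX' hY' hX hY hd' hd using 2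
      · simp only [zero_add]; exact Multiset.pair_comm _ _
      simp only [Multiset.insert_eq_cons, ← Multiset.cons_zero, tr_add, tr_cons, tr_zero, s.tr_two hX' hY' hd',
        s.tr_two hX hY hd, Multiset.singleton_add, Multiset.cons_add, zero_add, add_zero]
      simp only [← Multiset.singleton_add]
      abel
    · convert Ext.de F X Y X' Y' hF' hX hY hX' hY' hd hd' using 2
      · simp
      simp only [Multiset.insert_eq_cons, ← Multiset.cons_zero, tr_add, tr_cons, tr_zero, s.tr_two hX' hY' hd',
        s.tr_two hX hY hd, Multiset.singleton_add, Multiset.cons_add, zero_add, add_zero]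
end Setup
end Core3

section Core4
set_option linter.unusedSectionVars false
set_option linter.unusedSimpArgs false
variable {V : Type*} [DecidableEq V]
namespace Setup
variable (s : Setup V)

/-- rotated setup -/
def rot : Setup V where
  v k := s.v (k + 1)
  u k := s.u (k + 1)
  E := s.E
  v_inj := fun a b h => add_right_cancel (s.v_inj h)
  huv k j := s.huv _ _
  noloop := s.noloop
  hE e he k h := s.hE e he _ h
  hs k := s.hs _
  hdeg k := s.hdeg _

theorem rot_E : s.rot.E = s.E := rfl
theorem rot_c (k : Fin 4) : s.rot.c k = s.c (k + 1) := rfl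

theorem rot_g (J : Finset (Fin 4)) : s.rot.g J = s.g (J.image (· + 1)) := by
  unfold g
  rw [Finset.image_image]; rfl

theorem rot_glue (P : Finset (Sym2 V)) (J : Finset (Fin 4)) :
    s.rot.glue P J = s.glue P (J.image (· + 1)) := by
  unfold glue
  rw [rot_g]

theorem rot_tr (C : Multiset (Finset (Sym2 V))) : s.rot.tr C = s.tr C := rfl

theorem rot_sp (P : Finset (Sym2 V)) : (s.rot.sp P).image (· + 1) = s.sp P := by
  ext k
  simp only [Finset.mem_image, mem_sp]
  constructor
  · rintro ⟨j, h, rfl⟩; exact h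
  · intro h
    refine ⟨k - 1, ?_, by simp⟩
    simpa [rot] using h

theorem rot_pth {I I' : Finset (Fin 4)} {P : Finset (Sym2 V)} (hI : I'.image (· + 1) = I) :
    s.rot.IsPth I' P ↔ s.IsPth I P := by
  unfold IsPth
  rw [rot_E, ← s.rot_sp, ← hI]
  have h1 : s.rot.sp P = I' ↔ (s.rot.sp P).image (· + 1) = I'.image (· + 1) := by
    constructor
    · intro h; rw [h]
    · intro h; exact Finset.image_injective (add_left_injective 1) h
  have h2 : ∀ x, (∀ k, x ≠ s.rot.v k) ↔ ∀ k, x ≠ s.v k := by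
    intro x
    constructor
    · intro h k
      have := h (k - 1)
      simpa [rot] using this
    · intro h k; exact h _
  rw [h1]
  simp only [h2]

theorem rot_IsDC {J J' : Finset (Fin 4)} (hJ : J'.image (· + 1) = J)
    (C : Multiset (Finset (Sym2 V))) : s.rot.IsDC J' C ↔ s.IsDC J C := by
  unfold IsDC
  rw [rot_E, rot_g, hJ]

theorem rot_F [Fintype V] {J J' : Finset (Fin 4)} (hJ : J'.image (· + 1) = J)
    (T : Multiset (Finset (Sym2 V))) : s.rot.F J' T = s.F J T := by
  ext C
  rw [mem_F, mem_F, rot_tr, s.rot_IsDC hJ]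

theorem cancel {F F' L L' : Multiset (Finset (Sym2 V))} (hF : ∀ K ∈ F, s.IsPth ∅ K)
    (hF' : ∀ K ∈ F', s.IsPth ∅ K) (hL : ∀ K ∈ L, s.sp K ≠ ∅) (hL' : ∀ K ∈ L', s.sp K ≠ ∅)
    (h : F + L = F' + L') : F = F' ∧ L = L' := by
  have h0 : ∀ F : Multiset (Finset (Sym2 V)), (∀ K ∈ F, s.IsPth ∅ K) →
      F.filter (fun K => s.sp K = ∅) = F :=
    fun F hF => Multiset.filter_eq_self.2 fun K hK => (hF K hK).2.2.2
  have h1 : ∀ L : Multiset (Finset (Sym2 V)), (∀ K ∈ L, s.sp K ≠ ∅) →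
      L.filter (fun K => s.sp K = ∅) = 0 :=
    fun L hL => Multiset.filter_eq_nil.2 fun K hK => hL K hK
  have h2 := congrArg (Multiset.filter (fun K => s.sp K = ∅)) h
  rw [Multiset.filter_add, Multiset.filter_add, h0 F hF, h0 F' hF', h1 L hL, h1 L' hL', add_zero,
    add_zero] at h2
  subst h2
  exact ⟨rfl, add_left_cancel h⟩

theorem nz4 {P Q X Y : Finset (Sym2 V)} {a b c d : Finset (Fin 4)} (hP : s.IsPth a P)
    (hQ : s.IsPth b Q) (hX : s.IsPth c X) (hY : s.IsPth d Y)
    (h : a ≠ ∅ ∧ b ≠ ∅ ∧ c ≠ ∅ ∧ d ≠ ∅) :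
    ∀ K ∈ ({P, Q, X, Y} : Multiset (Finset (Sym2 V))), s.sp K ≠ ∅ := by
  intro K hK
  simp only [Multiset.insert_eq_cons, Multiset.mem_cons, Multiset.mem_singleton] at hK
  rcases hK with rfl | rfl | rfl | rfl
  · rw [hP.2.2.2]; exact h.1
  · rw [hQ.2.2.2]; exact h.2.1
  · rw [hX.2.2.2]; exact h.2.2.1
  · rw [hY.2.2.2]; exact h.2.2.2

theorem cancel4 {F F' : Multiset (Finset (Sym2 V))} (hF : ∀ K ∈ F, s.IsPth ∅ K)
    (hF' : ∀ K ∈ F', s.IsPth ∅ K)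
    {P Q X Y : Finset (Sym2 V)} {a b c d : Finset (Fin 4)} (hP : s.IsPth a P)
    (hQ : s.IsPth b Q) (hX : s.IsPth c X) (hY : s.IsPth d Y)
    {P' Q' X' Y' : Finset (Sym2 V)} {a' b' c' d' : Finset (Fin 4)} (hP' : s.IsPth a' P')
    (hQ' : s.IsPth b' Q') (hX' : s.IsPth c' X') (hY' : s.IsPth d' Y')
    (h : a ≠ ∅ ∧ b ≠ ∅ ∧ c ≠ ∅ ∧ d ≠ ∅) (h' : a' ≠ ∅ ∧ b' ≠ ∅ ∧ c' ≠ ∅ ∧ d' ≠ ∅)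
    (he : F + {P, Q, X, Y} = F' + {P', Q', X', Y'}) :
    F = F' ∧ ({a, b, c, d} : Multiset (Finset (Fin 4))) = {a', b', c', d'} ∧
    ∀ I : Finset (Fin 4),
    (({P, Q, X, Y} : Multiset (Finset (Sym2 V))).filter (fun K => s.sp K = I)) =
    (({P', Q', X', Y'} : Multiset (Finset (Sym2 V))).filter (fun K => s.sp K = I)) := by
  obtain ⟨h1, h2⟩ := s.cancel hF hF' (s.nz4 hP hQ hX hY h) (s.nz4 hP' hQ' hX' hY' h') he
  refine ⟨h1, ?_, fun I => by rw [h2]⟩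
  have := congrArg (Multiset.map s.sp) h2
  simpa only [Multiset.insert_eq_cons, Multiset.map_cons, Multiset.map_singleton, hP.2.2.2,
    hQ.2.2.2, hX.2.2.2, hY.2.2.2, hP'.2.2.2, hQ'.2.2.2, hX'.2.2.2, hY'.2.2.2] using this

theorem pair_eq {α : Type*} {a b c d : α} (h : ({a, b} : Multiset α) = {c, d}) :
    (a = c ∧ b = d) ∨ (a = d ∧ b = c) := by
  rw [Multiset.insert_eq_cons, Multiset.insert_eq_cons, Multiset.cons_eq_cons] at h
  rcases h with ⟨h1, h2⟩ | ⟨h1, cs, h2, h3⟩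
  · exact Or.inl ⟨h1, by simpa using h2⟩
  · right
    rw [Multiset.singleton_eq_cons_iff] at h2 h3
    exact ⟨h3.1.symm, h2.1⟩

theorem filt4 {P Q X Y : Finset (Sym2 V)} {a b c d : Finset (Fin 4)} (hP : s.IsPth a P)
    (hQ : s.IsPth b Q) (hX : s.IsPth c X) (hY : s.IsPth d Y) (I : Finset (Fin 4)) :
    (({P, Q, X, Y} : Multiset (Finset (Sym2 V))).filter (fun K => s.sp K = I)) =
    (if a = I then {P} else 0) + ((if b = I then {Q} else 0) + ((if c = I then {X} else 0) +
      (if d = I then {Y} else 0))) := by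
  simp only [Multiset.insert_eq_cons, Multiset.filter_cons, Multiset.filter_singleton, hP.2.2.2,
    hQ.2.2.2, hX.2.2.2, hY.2.2.2]
  rfl

variable {s}
variable {D T F : Multiset (Finset (Sym2 V))} {P P' Q Q' X Y X' Y' : Finset (Sym2 V)}

theorem inv_al (h : Ext s D T) (hF : ∀ K ∈ F, s.IsPth ∅ K)
    (hP : s.IsPth {0, 3} P) (hP' : s.IsPth {0, 3} P') (hQ : s.IsPth {1, 2} Q)
    (hQ' : s.IsPth {1, 2} Q') (hT : T = F + {P, P', Q, Q'}) :
    D = F + {s.glue P {3}, s.glue P' {3}, s.glue Q {1}, s.glue Q' {1}} := by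
  cases h with
  | al _ _ _ _ _ eF e1 e2 e3 e4 =>
    obtain ⟨rfl, -, h⟩ := s.cancel4 eF hF e1 e2 e3 e4 hP hP' hQ hQ' (by decide) (by decide) hT
    have h1 := h {0, 3}
    have h2 := h {1, 2}
    rw [s.filt4 e1 e2 e3 e4, s.filt4 hP hP' hQ hQ'] at h1 h2
    simp +decide only [if_true, if_false, zero_add, add_zero, Multiset.singleton_add] at h1 h2
    rcases pair_eq h1 with ⟨rfl, rfl⟩ | ⟨rfl, rfl⟩ <;>
    rcases pair_eq h2 with ⟨rfl, rfl⟩ | ⟨rfl, rfl⟩ <;>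
    · congr 1 <;> simp only [Multiset.insert_eq_cons, ← Multiset.singleton_add] <;> abel
  | be _ _ _ _ _ eF e1 e2 e3 e4 =>
    exact absurd (s.cancel4 eF hF e1 e2 e3 e4 hP hP' hQ hQ' (by decide) (by decide) hT).2.1 (by decide)
  | ga _ _ _ _ _ eF e1 e2 e3 e4 =>
    exact absurd (s.cancel4 eF hF e1 e2 e3 e4 hP hP' hQ hQ' (by decide) (by decide) hT).2.1 (by decide)
  | al' _ _ _ _ _ eF e1 e2 e3 e4 =>
    exact absurd (s.cancel4 eF hF e1 e2 e3 e4 hP hP' hQ hQ' (by decide) (by decide) hT).2.1 (by decide)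
  | ga' _ _ _ _ _ eF e1 e2 e3 e4 =>
    exact absurd (s.cancel4 eF hF e1 e2 e3 e4 hP hP' hQ hQ' (by decide) (by decide) hT).2.1 (by decide)
  | de _ _ _ _ _ eF e1 e2 e3 e4 =>
    exact absurd (s.cancel4 eF hF e1 e2 e3 e4 hP hP' hQ hQ' (by decide) (by decide) hT).2.1 (by decide)

theorem inv_be (h : Ext s D T) (hF : ∀ K ∈ F, s.IsPth ∅ K)
    (hP : s.IsPth {0, 3} P) (hQ : s.IsPth {1, 2} Q) (hX : s.IsPth {0, 1} X) (hY : s.IsPth {2, 3} Y)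
    (hT : T = F + {P, Q, X, Y}) :
    Dj X Y ∧ D = F + {s.glue P {3}, s.glue Q {1}, s.glue (X ∪ Y) {1, 3}} := by
  cases h with
  | al _ _ _ _ _ eF e1 e2 e3 e4 =>
    exact absurd (s.cancel4 eF hF e1 e2 e3 e4 hP hQ hX hY (by decide) (by decide) hT).2.1 (by decide)
  | be _ _ _ _ _ eF e1 e2 e3 e4 ed =>
    obtain ⟨rfl, -, h⟩ := s.cancel4 eF hF e1 e2 e3 e4 hP hQ hX hY (by decide) (by decide) hT
    have h1 := h {0, 3}
    have h2 := h {1, 2}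
    have h3 := h {0, 1}
    have h4 := h {2, 3}
    rw [s.filt4 e1 e2 e3 e4, s.filt4 hP hQ hX hY] at h1 h2 h3 h4
    simp +decide only [if_true, if_false, zero_add, add_zero, Multiset.singleton_add] at h1 h2 h3 h4
    rw [Multiset.singleton_inj] at h1 h2 h3 h4
    subst h1 h2 h3 h4
    exact ⟨ed, rfl⟩
  | ga _ _ _ _ _ eF e1 e2 e3 e4 =>
    exact absurd (s.cancel4 eF hF e1 e2 e3 e4 hP hQ hX hY (by decide) (by decide) hT).2.1 (by decide)
  | al' _ _ _ _ _ eF e1 e2 e3 e4 =>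
    exact absurd (s.cancel4 eF hF e1 e2 e3 e4 hP hQ hX hY (by decide) (by decide) hT).2.1 (by decide)
  | ga' _ _ _ _ _ eF e1 e2 e3 e4 =>
    exact absurd (s.cancel4 eF hF e1 e2 e3 e4 hP hQ hX hY (by decide) (by decide) hT).2.1 (by decide)
  | de _ _ _ _ _ eF e1 e2 e3 e4 =>
    exact absurd (s.cancel4 eF hF e1 e2 e3 e4 hP hQ hX hY (by decide) (by decide) hT).2.1 (by decide)

theorem inv_ga (h : Ext s D T) (hF : ∀ K ∈ F, s.IsPth ∅ K)
    (hP : s.IsPth {0, 3} P) (hQ : s.IsPth {1, 2} Q) (hX : s.IsPth {0, 2} X) (hY : s.IsPth {1, 3} Y)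
    (hT : T = F + {P, Q, X, Y}) :
    Dj X Y ∧ D = F + {s.glue P {3}, s.glue Q {1}, s.glue (X ∪ Y) {1, 3}} := by
  cases h with
  | al _ _ _ _ _ eF e1 e2 e3 e4 =>
    exact absurd (s.cancel4 eF hF e1 e2 e3 e4 hP hQ hX hY (by decide) (by decide) hT).2.1 (by decide)
  | be _ _ _ _ _ eF e1 e2 e3 e4 =>
    exact absurd (s.cancel4 eF hF e1 e2 e3 e4 hP hQ hX hY (by decide) (by decide) hT).2.1 (by decide)
  | ga _ _ _ _ _ eF e1 e2 e3 e4 ed =>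
    obtain ⟨rfl, -, h⟩ := s.cancel4 eF hF e1 e2 e3 e4 hP hQ hX hY (by decide) (by decide) hT
    have h1 := h {0, 3}
    have h2 := h {1, 2}
    have h3 := h {0, 2}
    have h4 := h {1, 3}
    rw [s.filt4 e1 e2 e3 e4, s.filt4 hP hQ hX hY] at h1 h2 h3 h4
    simp +decide only [if_true, if_false, zero_add, add_zero, Multiset.singleton_add] at h1 h2 h3 h4
    rw [Multiset.singleton_inj] at h1 h2 h3 h4
    subst h1 h2 h3 h4
    exact ⟨ed, rfl⟩
  | al' _ _ _ _ _ eF e1 e2 e3 e4 =>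
    exact absurd (s.cancel4 eF hF e1 e2 e3 e4 hP hQ hX hY (by decide) (by decide) hT).2.1 (by decide)
  | ga' _ _ _ _ _ eF e1 e2 e3 e4 =>
    exact absurd (s.cancel4 eF hF e1 e2 e3 e4 hP hQ hX hY (by decide) (by decide) hT).2.1 (by decide)
  | de _ _ _ _ _ eF e1 e2 e3 e4 =>
    exact absurd (s.cancel4 eF hF e1 e2 e3 e4 hP hQ hX hY (by decide) (by decide) hT).2.1 (by decide)

theorem inv_ga2 (h : Ext s D T) (hF : ∀ K ∈ F, s.IsPth ∅ K)
    (hX : s.IsPth {0, 1} X) (hY : s.IsPth {2, 3} Y) (hX' : s.IsPth {0, 2} X') (hY' : s.IsPth {1, 3} Y')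
    (hT : T = F + {X, Y, X', Y'}) :
    Dj X Y ∧ Dj X' Y' ∧ D = F + {s.glue (X ∪ Y) {1, 3}, s.glue (X' ∪ Y') {1, 3}} := by
  cases h with
  | al _ _ _ _ _ eF e1 e2 e3 e4 =>
    exact absurd (s.cancel4 eF hF e1 e2 e3 e4 hX hY hX' hY' (by decide) (by decide) hT).2.1 (by decide)
  | be _ _ _ _ _ eF e1 e2 e3 e4 =>
    exact absurd (s.cancel4 eF hF e1 e2 e3 e4 hX hY hX' hY' (by decide) (by decide) hT).2.1 (by decide)
  | ga _ _ _ _ _ eF e1 e2 e3 e4 =>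
    exact absurd (s.cancel4 eF hF e1 e2 e3 e4 hX hY hX' hY' (by decide) (by decide) hT).2.1 (by decide)
  | al' _ _ _ _ _ eF e1 e2 e3 e4 =>
    exact absurd (s.cancel4 eF hF e1 e2 e3 e4 hX hY hX' hY' (by decide) (by decide) hT).2.1 (by decide)
  | ga' _ _ _ _ _ eF e1 e2 e3 e4 ed ed' =>
    obtain ⟨rfl, -, h⟩ := s.cancel4 eF hF e1 e2 e3 e4 hX hY hX' hY' (by decide) (by decide) hT
    have h1 := h {0, 1}
    have h2 := h {2, 3}
    have h3 := h {0, 2}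
    have h4 := h {1, 3}
    rw [s.filt4 e1 e2 e3 e4, s.filt4 hX hY hX' hY'] at h1 h2 h3 h4
    simp +decide only [if_true, if_false, zero_add, add_zero, Multiset.singleton_add] at h1 h2 h3 h4
    rw [Multiset.singleton_inj] at h1 h2 h3 h4
    subst h1 h2 h3 h4
    exact ⟨ed, ed', rfl⟩
  | de _ _ _ _ _ eF e1 e2 e3 e4 =>
    exact absurd (s.cancel4 eF hF e1 e2 e3 e4 hX hY hX' hY' (by decide) (by decide) hT).2.1 (by decide)

theorem inv_al2 (h : Ext s D T) (hF : ∀ K ∈ F, s.IsPth ∅ K)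
    (hX : s.IsPth {0, 1} X) (hY : s.IsPth {2, 3} Y) (hX' : s.IsPth {0, 1} X') (hY' : s.IsPth {2, 3} Y')
    (hT : T = F + {X, Y, X', Y'}) :
    (Dj X Y ∧ Dj X' Y' ∧ D = F + {s.glue (X ∪ Y) {1, 3}, s.glue (X' ∪ Y') {1, 3}}) ∨
    (Dj X Y' ∧ Dj X' Y ∧ D = F + {s.glue (X ∪ Y') {1, 3}, s.glue (X' ∪ Y) {1, 3}}) := by
  cases h with
  | al _ _ _ _ _ eF e1 e2 e3 e4 =>
    exact absurd (s.cancel4 eF hF e1 e2 e3 e4 hX hY hX' hY' (by decide) (by decide) hT).2.1 (by decide)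
  | be _ _ _ _ _ eF e1 e2 e3 e4 =>
    exact absurd (s.cancel4 eF hF e1 e2 e3 e4 hX hY hX' hY' (by decide) (by decide) hT).2.1 (by decide)
  | ga _ _ _ _ _ eF e1 e2 e3 e4 =>
    exact absurd (s.cancel4 eF hF e1 e2 e3 e4 hX hY hX' hY' (by decide) (by decide) hT).2.1 (by decide)
  | al' _ _ _ _ _ eF e1 e2 e3 e4 ed ed' =>
    obtain ⟨rfl, -, h⟩ := s.cancel4 eF hF e1 e2 e3 e4 hX hY hX' hY' (by decide) (by decide) hT
    have h1 := h {0, 1}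
    have h2 := h {2, 3}
    rw [s.filt4 e1 e2 e3 e4, s.filt4 hX hY hX' hY'] at h1 h2
    simp +decide only [if_true, if_false, zero_add, add_zero, Multiset.singleton_add] at h1 h2
    rcases pair_eq h1 with ⟨rfl, rfl⟩ | ⟨rfl, rfl⟩ <;>
    rcases pair_eq h2 with ⟨rfl, rfl⟩ | ⟨rfl, rfl⟩
    · exact Or.inl ⟨ed, ed', rfl⟩
    · exact Or.inr ⟨ed, ed', rfl⟩
    · exact Or.inr ⟨ed', ed, by rw [Multiset.pair_comm]⟩
    · exact Or.inl ⟨ed', ed, by rw [Multiset.pair_comm]⟩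
  | ga' _ _ _ _ _ eF e1 e2 e3 e4 =>
    exact absurd (s.cancel4 eF hF e1 e2 e3 e4 hX hY hX' hY' (by decide) (by decide) hT).2.1 (by decide)
  | de _ _ _ _ _ eF e1 e2 e3 e4 =>
    exact absurd (s.cancel4 eF hF e1 e2 e3 e4 hX hY hX' hY' (by decide) (by decide) hT).2.1 (by decide)

theorem inv_de (h : Ext s D T) (hF : ∀ K ∈ F, s.IsPth ∅ K)
    (hX : s.IsPth {0, 2} X) (hY : s.IsPth {1, 3} Y) (hX' : s.IsPth {0, 2} X') (hY' : s.IsPth {1, 3} Y')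
    (hT : T = F + {X, Y, X', Y'}) :
    (Dj X Y ∧ Dj X' Y' ∧ D = F + {s.glue (X ∪ Y) {1, 3}, s.glue (X' ∪ Y') {1, 3}}) ∨
    (Dj X Y' ∧ Dj X' Y ∧ D = F + {s.glue (X ∪ Y') {1, 3}, s.glue (X' ∪ Y) {1, 3}}) := by
  cases h with
  | al _ _ _ _ _ eF e1 e2 e3 e4 =>
    exact absurd (s.cancel4 eF hF e1 e2 e3 e4 hX hY hX' hY' (by decide) (by decide) hT).2.1 (by decide)
  | be _ _ _ _ _ eF e1 e2 e3 e4 =>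
    exact absurd (s.cancel4 eF hF e1 e2 e3 e4 hX hY hX' hY' (by decide) (by decide) hT).2.1 (by decide)
  | ga _ _ _ _ _ eF e1 e2 e3 e4 =>
    exact absurd (s.cancel4 eF hF e1 e2 e3 e4 hX hY hX' hY' (by decide) (by decide) hT).2.1 (by decide)
  | al' _ _ _ _ _ eF e1 e2 e3 e4 =>
    exact absurd (s.cancel4 eF hF e1 e2 e3 e4 hX hY hX' hY' (by decide) (by decide) hT).2.1 (by decide)
  | ga' _ _ _ _ _ eF e1 e2 e3 e4 =>
    exact absurd (s.cancel4 eF hF e1 e2 e3 e4 hX hY hX' hY' (by decide) (by decide) hT).2.1 (by decide)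
  | de _ _ _ _ _ eF e1 e2 e3 e4 ed ed' =>
    obtain ⟨rfl, -, h⟩ := s.cancel4 eF hF e1 e2 e3 e4 hX hY hX' hY' (by decide) (by decide) hT
    have h1 := h {0, 2}
    have h2 := h {1, 3}
    rw [s.filt4 e1 e2 e3 e4, s.filt4 hX hY hX' hY'] at h1 h2
    simp +decide only [if_true, if_false, zero_add, add_zero, Multiset.singleton_add] at h1 h2
    rcases pair_eq h1 with ⟨rfl, rfl⟩ | ⟨rfl, rfl⟩ <;>
    rcases pair_eq h2 with ⟨rfl, rfl⟩ | ⟨rfl, rfl⟩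
    · exact Or.inl ⟨ed, ed', rfl⟩
    · exact Or.inr ⟨ed, ed', rfl⟩
    · exact Or.inr ⟨ed', ed, by rw [Multiset.pair_comm]⟩
    · exact Or.inl ⟨ed', ed, by rw [Multiset.pair_comm]⟩

end Setup
end Core4

section Core5
set_option linter.unusedSectionVars false
set_option linter.unusedSimpArgs false
variable {V : Type*} [DecidableEq V]
namespace Setup
variable (s : Setup V)

theorem path_ne {T : Multiset (Finset (Sym2 V))} {P P' : Finset (Sym2 V)} {I : Finset (Fin 4)}
    (hT : ∀ e ∈ s.E, cov (P ::ₘ P' ::ₘ T) e = 2) (hP : s.IsPth I P) (hTp : ∀ R ∈ T, ∃ J, s.IsPth J R)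
    (k : Fin 4) (hk : k ∈ I) : P ≠ P' := by
  rintro rfl
  have hu : ∀ j, s.u k ≠ s.v j := s.huv k
  have hsp : s(s.v k, s.u k) ∈ P := by rw [← s.mem_sp, hP.2.2.2]; exact hk
  have hd : deg P (s.u k) = 2 := by
    rcases hP.2.2.1 _ hu with h | h
    · rw [deg_eq_zero] at h
      exact absurd (by simp) (h _ hsp)
    · exact h
  have hnot : ∀ e ∈ P, cov T e = 0 := by
    intro e he
    have := hT e (hP.1 he)
    rw [cov_cons, cov_cons] at this
    simp [he] at this; exact this
  have hu2 : deg (P ∪ (s.E \ P)) (s.u k) = deg P (s.u k) + deg (s.E \ P) (s.u k) :=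
    deg_union Finset.disjoint_sdiff _
  rw [Finset.union_sdiff_of_subset hP.1, s.hdeg, hd] at hu2
  have h1 : deg (s.E \ P) (s.u k) = 1 := by omega
  have h2 : deg (s.E \ P) (s.u k) ≠ 0 := by omega
  rw [Ne, deg_eq_zero] at h2
  push Not at h2
  obtain ⟨f, hf, hfu⟩ := h2
  rw [Finset.mem_sdiff] at hf
  have h3 := hT f hf.1
  rw [cov_cons, cov_cons] at h3
  simp only [hf.2, if_false, add_zero] at h3
  obtain ⟨R, hR, hfR⟩ := cov_pos (C := T) (e := f) (by omega)
  obtain ⟨J, hRp⟩ := hTp R hR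
  have h4 : R ⊆ s.E \ P := by
    intro e he
    rw [Finset.mem_sdiff]
    refine ⟨hRp.1 he, fun heP => ?_⟩
    have := hnot e heP
    rw [cov, Multiset.countP_eq_zero] at this
    exact this R hR he
  have h5 := deg_mono h4 (s.u k)
  rcases hRp.2.2.1 _ hu with h | h
  · rw [deg_eq_zero] at h
    exact h f hfR hfu
  · omega

/-- set of cycle edges used -/
def jj (K : Finset (Sym2 V)) : Finset (Fin 4) := Finset.univ.filter (fun k => s.c k ∈ K)

theorem jj_glue {P : Finset (Sym2 V)} (hP : P ⊆ s.E) (J : Finset (Fin 4)) :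
    s.jj (s.glue P J) = J := by
  ext k
  simp [jj, s.mem_mk_c hP]

/-- code of a circuit: set of paths used and set of cycle edges used -/
abbrev Item := Finset (Fin 4) × Finset (Fin 4)

/-- valid single -/
def v1 (I J : Finset (Fin 4)) : Prop := gconn J ∧ okdeg I J ∧ ∃ k ∈ I, touch k J
instance (I J : Finset (Fin 4)) : Decidable (v1 I J) := by unfold v1; infer_instance

/-- valid double -/
def v2 (I I' : Finset (Fin 4)) (a b : Fin 4) : Prop :=
  okdeg (I ∪ I') ({a} ∪ {b}) ∧ (∃ k ∈ I, touch k {a}) ∧ (∃ k ∈ I', touch k {a}) ∧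
    (∃ k ∈ I, touch k {b})
instance (I I' : Finset (Fin 4)) (a b : Fin 4) : Decidable (v2 I I' a b) := by
  unfold v2; infer_instance

/-- valid item -/
def vitem (I : Fin 4 → Finset (Fin 4)) (dj : Finset (Fin 4 × Fin 4)) (x : Item) : Prop :=
  (x.1 = ∅ ∧ x.2 = Finset.univ) ∨ (∃ i, x.1 = {i} ∧ v1 (I i) x.2) ∨
  (∃ y ∈ dj, x.1 = {y.1, y.2} ∧ ((x.2 = {0, 2} ∧ v2 (I y.1) (I y.2) 0 2) ∨
    (x.2 = {1, 3} ∧ v2 (I y.1) (I y.2) 1 3)))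
instance (I : Fin 4 → Finset (Fin 4)) (dj : Finset (Fin 4 × Fin 4)) (x : Item) :
    Decidable (vitem I dj x) := by unfold vitem; infer_instance

/-- valid code of a cover -/
def vcode (I : Fin 4 → Finset (Fin 4)) (dj : Finset (Fin 4 × Fin 4)) (L : Multiset Item) : Prop :=
  (∀ x ∈ L, vitem I dj x) ∧ (∀ k : Fin 4, (L.map Prod.snd).countP (fun J => k ∈ J) = 2) ∧
  L.bind (fun x => x.1.val) = Finset.univ.val
instance (I : Fin 4 → Finset (Fin 4)) (dj : Finset (Fin 4 × Fin 4)) (L : Multiset Item) :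
    Decidable (vcode I dj L) := by unfold vcode; infer_instance

theorem gconn1 : ∀ a : Fin 4, gconn {a} := by decide

variable {s}

theorem item_ok {p : Fin 4 → Finset (Sym2 V)} {I : Fin 4 → Finset (Fin 4)}
    (hp : ∀ i, s.IsPth (I i) (p i)) (hinj : Function.Injective p)
    {dj : Finset (Fin 4 × Fin 4)} (hdj : ∀ y ∈ dj, Dj (p y.1) (p y.2)) {x : Item}
    (hx : vitem I dj x) :
    IsCirc (s.glue (x.1.biUnion p) x.2) ∧ comps (x.1.biUnion p) = x.1.image p := by
  obtain ⟨A, J⟩ := x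
  rcases hx with ⟨h1, h2⟩ | ⟨i, h1, h2⟩ | ⟨⟨i, j⟩, hy, h1, h2⟩ <;> simp only at h1 h2 ⊢
  · subst h1 h2
    rw [Finset.biUnion_empty, Finset.image_empty]
    exact ⟨s.circ_face, comps_empty⟩
  · subst h1
    rw [Finset.singleton_biUnion, Finset.image_singleton]
    obtain ⟨a, b, k, c, d⟩ := h2
    exact ⟨circ1 (hp i) k ⟨a, b, c, d⟩, comps_conn (hp i).2.1⟩
  · subst h1
    have hd := hdj _ hy
    simp only at hd
    have e1 : ({i, j} : Finset (Fin 4)).biUnion p = p i ∪ p j := by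
      rw [Finset.biUnion_insert, Finset.singleton_biUnion]
    have e2 : ({i, j} : Finset (Fin 4)).image p = {p i, p j} := by
      rw [Finset.image_insert, Finset.image_singleton]
    rw [e1, e2]
    refine ⟨?_, comps_two (hp i).2.1 (hp j).2.1 hd⟩
    rcases h2 with ⟨rfl, a, ⟨k1, b1, b2⟩, ⟨k2, c1, c2⟩, ⟨k3, d1, d2⟩⟩ |
      ⟨rfl, a, ⟨k1, b1, b2⟩, ⟨k2, c1, c2⟩, ⟨k3, d1, d2⟩⟩
    · exact circ2 {0} {2} (hp i) (hp j) hd k1 k2 k3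
        ⟨gconn1 _, gconn1 _, a, b1, b2, c1, c2, d1, d2⟩
    · exact circ2 {1} {3} (hp i) (hp j) hd k1 k2 k3
        ⟨gconn1 _, gconn1 _, a, b1, b2, c1, c2, d1, d2⟩

theorem codes [Fintype V] {F : Multiset (Finset (Sym2 V))} (hF : ∀ K ∈ F, s.IsPth ∅ K)
    {p : Fin 4 → Finset (Sym2 V)} {I : Fin 4 → Finset (Fin 4)}
    (hp : ∀ i, s.IsPth (I i) (p i)) (hinj : Function.Injective p)
    {T : Multiset (Finset (Sym2 V))} (hT : T = F + {p 0, p 1, p 2, p 3})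
    (hcov : ∀ e ∈ s.E, cov T e = 2)
    (dj : Finset (Fin 4 × Fin 4)) (hdj : ∀ y ∈ dj, Dj (p y.1) (p y.2))
    (S : Finset (Multiset Item)) (hS : ∀ L ∈ S, vcode I dj L) :
    S.card ≤ (s.F Finset.univ T).card := by
  have hpE : ∀ A : Finset (Fin 4), A.biUnion p ⊆ s.E := by
    intro A
    rw [Finset.biUnion_subset]
    intro i _; exact (hp i).1
  apply Finset.card_le_card_of_injOn
    (fun L => F + L.map (fun x => s.glue (x.1.biUnion p) x.2))
  · intro L hL
    have hv := hS L hL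
    have := s.build (T := T) (F := F) hcov hF (L.map (fun x => (x.1.biUnion p, x.2))) (by
      intro q hq
      obtain ⟨x, hx, rfl⟩ := Multiset.mem_map.1 hq
      exact ⟨hpE _, (item_ok hp hinj hdj (hv.1 x hx)).1⟩) (by
      intro k
      rw [Multiset.map_map]
      exact hv.2.1 k) (by
      rw [hT]
      congr 1
      have e1 : ({p 0, p 1, p 2, p 3} : Multiset (Finset (Sym2 V))) =
          (Finset.univ : Finset (Fin 4)).val.map p := rfl
      rw [e1, ← hv.2.2, Multiset.map_bind, Multiset.bind_map]
      apply Multiset.bind_congr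
      intro x hx
      rw [(item_ok hp hinj hdj (hv.1 x hx)).2, Finset.image_val_of_injOn hinj.injOn])
    rw [Multiset.map_map] at this
    exact this
  · intro L hL L' hL' h
    have h2 : L.map (fun x => s.glue (x.1.biUnion p) x.2) =
        L'.map (fun x => s.glue (x.1.biUnion p) x.2) := add_left_cancel h
    let dec : Finset (Sym2 V) → Item := fun K =>
      (Finset.univ.filter (fun i => p i ∈ comps (K ∩ s.E)), s.jj K)
    have key : ∀ L ∈ S, (L.map (fun x => s.glue (x.1.biUnion p) x.2)).map dec = L := by
      intro L hL
      rw [Multiset.map_map]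
      conv_rhs => rw [← Multiset.map_id L]
      apply Multiset.map_congr rfl
      intro x hx
      simp only [Function.comp, dec, id]
      rw [s.jj_glue (hpE _), s.mk_inter (hpE _), (item_ok hp hinj hdj ((hS L hL).1 x hx)).2]
      ext i
      · simp [hinj.eq_iff]
      · rfl
    rw [← key L hL, ← key L' hL', h2]

end Setup
end Core5

section Core6
set_option linter.unusedSectionVars false
set_option linter.unusedSimpArgs false
set_option maxRecDepth 100000
variable {V : Type*} [DecidableEq V]
namespace Setup

/-- the four covers of type alpha, and the extra ones -/
def salpha (a b : Bool) : Finset (Multiset Item) :=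
  {{({0}, {3}), ({1}, {0, 1, 2}), ({2}, {1}), ({3}, {2, 3, 0})},
   {({1}, {3}), ({0}, {0, 1, 2}), ({2}, {1}), ({3}, {2, 3, 0})},
   {({0}, {3}), ({1}, {0, 1, 2}), ({3}, {1}), ({2}, {2, 3, 0})},
   {({1}, {3}), ({0}, {0, 1, 2}), ({3}, {1}), ({2}, {2, 3, 0})}} ∪
  (bif a then {{({1}, {3}), ({3}, {1}), ({0, 2}, {0, 2}), (∅, Finset.univ)},
    {({0}, {3}), ({2}, {1}), ({1, 3}, {0, 2}), (∅, Finset.univ)}} else ∅) ∪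
  (bif b then {{({1}, {3}), ({2}, {1}), ({0, 3}, {0, 2}), (∅, Finset.univ)},
    {({0}, {3}), ({3}, {1}), ({1, 2}, {0, 2}), (∅, Finset.univ)}} else ∅)

/-- disjoint pairs -/
def dpair (a b : Bool) : Finset (Fin 4 × Fin 4) :=
  (bif a then {(0, 2), (1, 3)} else ∅) ∪ (bif b then {(0, 3), (1, 2)} else ∅)

theorem salpha_ok : ∀ a b : Bool, (∀ L ∈ salpha a b,
    vcode ![{0, 3}, {0, 3}, {1, 2}, {1, 2}] (dpair a b) L) ∧
    4 + (2 * a.toNat + 2 * b.toNat) ≤ (salpha a b).card := by decide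

/-- covers of type delta -/
def sdelta (a b : Bool) : Finset (Multiset Item) :=
  {{({0}, {0, 1}), ({1}, {2, 3}), ({2}, {1, 2}), ({3}, {3, 0})},
   {({1}, {0, 1}), ({0}, {2, 3}), ({2}, {1, 2}), ({3}, {3, 0})},
   {({0}, {0, 1}), ({1}, {2, 3}), ({3}, {1, 2}), ({2}, {3, 0})},
   {({1}, {0, 1}), ({0}, {2, 3}), ({3}, {1, 2}), ({2}, {3, 0})}} ∪
  (bif a then {{({0, 2}, {1, 3}), ({1, 3}, {0, 2}), (∅, Finset.univ)},
    {({0, 2}, {0, 2}), ({1, 3}, {1, 3}), (∅, Finset.univ)}} else ∅) ∪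
  (bif b then {{({0, 3}, {1, 3}), ({1, 2}, {0, 2}), (∅, Finset.univ)},
    {({0, 3}, {0, 2}), ({1, 2}, {1, 3}), (∅, Finset.univ)}} else ∅)

theorem sdelta_ok : ∀ a b : Bool, (∀ L ∈ sdelta a b,
    vcode ![{0, 2}, {0, 2}, {1, 3}, {1, 3}] (dpair a b) L) ∧
    4 + (2 * a.toNat + 2 * b.toNat) ≤ (sdelta a b).card := by decide

/-- covers of type beta: paths `{0,3}, {1,2}, {0,1}, {2,3}` -/
def sbeta (a b : Bool) : Finset (Multiset Item) :=
  {{({0}, {3}), ({1}, {1}), ({2}, {0}), ({3}, {2}), (∅, Finset.univ)}} ∪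
  (bif a then {{({0}, {0, 1, 2}), ({1}, {2, 3, 0}), ({2, 3}, {1, 3})}} else ∅) ∪
  (bif b then {{({2}, {1, 2, 3}), ({3}, {3, 0, 1}), ({0, 1}, {0, 2})}} else ∅) ∪
  (bif a && b then {{({2, 3}, {1, 3}), ({0, 1}, {0, 2}), (∅, Finset.univ)}} else ∅)

/-- disjoint pairs -/
def dpair2 (a b : Bool) : Finset (Fin 4 × Fin 4) :=
  (bif a then {(2, 3)} else ∅) ∪ (bif b then {(0, 1)} else ∅)

theorem sbeta_ok : ∀ a b : Bool, (∀ L ∈ sbeta a b,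
    vcode ![{0, 3}, {1, 2}, {0, 1}, {2, 3}] (dpair2 a b) L) ∧
    2 * a.toNat + 2 * b.toNat ≤ (sbeta a b).card := by decide

/-- covers of type gamma: paths `{0,3}, {1,2}, {0,2}, {1,3}` -/
def sgamma : Finset (Multiset Item) :=
  {{({2}, {0, 1}), ({3}, {1, 2}), ({1}, {2, 3, 0}), ({0}, {3})},
   {({2}, {2, 3}), ({3}, {3, 0}), ({0}, {0, 1, 2}), ({1}, {1})},
   {({1}, {1}), ({0}, {3}), ({2, 3}, {0, 2}), (∅, Finset.univ)},
   {({0}, {0, 1, 2}), ({1}, {2, 3, 0}), ({2, 3}, {1, 3})}}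

theorem sgamma_ok : (∀ L ∈ sgamma,
    vcode ![{0, 3}, {1, 2}, {0, 2}, {1, 3}] {(2, 3)} L) ∧ 4 ≤ sgamma.card := by decide

end Setup
end Core6

section Core7
set_option linter.unusedSectionVars false
set_option linter.unusedSimpArgs false
variable {V : Type*} [DecidableEq V] [Fintype V]
namespace Setup
variable {s : Setup V}

/-- fiber inequality -/
def Good (s : Setup V) (T : Multiset (Finset (Sym2 V))) : Prop :=
  2 * (s.F {1, 3} T).card + 2 * (s.F {0, 2} T).card ≤ (s.F Finset.univ T).card

theorem good_rot (T : Multiset (Finset (Sym2 V))) : Good s.rot T ↔ Good s T := by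
  unfold Good
  rw [s.rot_F (J := {0, 2}) (J' := {1, 3}) (by decide),
    s.rot_F (J := {1, 3}) (J' := {0, 2}) (by decide),
    s.rot_F (J := Finset.univ) (J' := Finset.univ) (by decide), add_comm]

variable {D T F : Multiset (Finset (Sym2 V))} {P P' Q Q' X Y X' Y' : Finset (Sym2 V)}

theorem extF1 (h : D ∈ s.F {1, 3} T) : Ext s D T := by
  rw [mem_F] at h
  rw [← h.2]; exact s.ext1 h.1

theorem extF2 (h : D ∈ s.F {0, 2} T) : Ext s.rot D T := by
  rw [mem_F] at h
  rw [← h.2, ← rot_tr]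
  exact s.rot.ext1 ((s.rot_IsDC (by decide) D).2 h.1)

theorem upper {α : Type*} {S : Finset α} (x y : α) (A B : Prop) [Decidable A] [Decidable B]
    (h : ∀ d ∈ S, (A ∧ d = x) ∨ (B ∧ d = y)) : S.card ≤ (decide A).toNat + (decide B).toNat := by
  classical
  have : S ⊆ (if A then {x} else ∅) ∪ (if B then {y} else ∅) := by
    intro d hd
    rcases h d hd with ⟨h1, rfl⟩ | ⟨h1, rfl⟩ <;> simp [h1]
  refine (Finset.card_le_card this).trans ((Finset.card_union_le _ _).trans ?_)
  by_cases hA : A <;> by_cases hB : B <;> simp [hA, hB]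

theorem upper1 {α : Type*} {S : Finset α} (x : α) (A : Prop) [Decidable A]
    (h : ∀ d ∈ S, A ∧ d = x) : S.card ≤ (decide A).toNat := by
  have := upper (S := S) x x A False (fun d hd => Or.inl (h d hd))
  simpa using this

theorem mperm {α : Type*} (F : Multiset α) (a b c d : α) :
    F + {a, b, c, d} = F + {c, a, d, b} ∧ F + {a, b, c, d} = F + {a, c, b, d} ∧
    F + {a, b, c, d} = F + {c, d, b, a} ∧ F + {a, b, c, d} = F + {b, a, d, c} ∧
    F + {a, b, c, d} = a ::ₘ b ::ₘ (F + {c, d}) ∧ F + {a, b, c, d} = c ::ₘ d ::ₘ (F + {a, b}) ∧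
    F + {a, b, c, d} = F + {a, b, d, c} := by
  simp only [Multiset.insert_eq_cons, ← Multiset.singleton_add]
  refine ⟨?_, ?_, ?_, ?_, ?_, ?_, ?_⟩ <;> abel

theorem two_ne {I I' : Finset (Fin 4)} (hF : ∀ K ∈ F, s.IsPth ∅ K) (hP : s.IsPth I P)
    (hP' : s.IsPth I P') (hQ : s.IsPth I' Q)
    (hQ' : s.IsPth I' Q') (hcov : ∀ e ∈ s.E, cov (F + {P, P', Q, Q'}) e = 2)
    (hI : I.Nonempty) (hI' : I'.Nonempty) : P ≠ P' ∧ Q ≠ Q' := by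
  obtain ⟨k, hk⟩ := hI
  obtain ⟨l, hl⟩ := hI'
  constructor
  · refine s.path_ne (T := F + {Q, Q'}) (by rwa [← (mperm F P P' Q Q').2.2.2.2.1]) hP ?_ k hk
    intro R hR
    simp only [Multiset.mem_add, Multiset.insert_eq_cons, Multiset.mem_cons, Multiset.mem_singleton] at hR
    rcases hR with hR | rfl | rfl
    · exact ⟨_, hF R hR⟩
    · exact ⟨_, hQ⟩
    · exact ⟨_, hQ'⟩
  · refine s.path_ne (T := F + {P, P'}) (by rwa [← (mperm F P P' Q Q').2.2.2.2.2.1]) hQ ?_ l hl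
    intro R hR
    simp only [Multiset.mem_add, Multiset.insert_eq_cons, Multiset.mem_cons, Multiset.mem_singleton] at hR
    rcases hR with hR | rfl | rfl
    · exact ⟨_, hF R hR⟩
    · exact ⟨_, hP⟩
    · exact ⟨_, hP'⟩

theorem pth_ne {I I' : Finset (Fin 4)} (hP : s.IsPth I P) (hQ : s.IsPth I' Q) (h : I ≠ I') :
    P ≠ Q := by
  rintro rfl
  exact h (hP.2.2.2.symm.trans hQ.2.2.2)

theorem inj4 {α : Type*} {a b c d : α} (h1 : a ≠ b) (h2 : a ≠ c) (h3 : a ≠ d) (h4 : b ≠ c)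
    (h5 : b ≠ d) (h6 : c ≠ d) : Function.Injective ![a, b, c, d] := by
  intro i j h
  fin_cases i <;> fin_cases j <;> simp_all [eq_comm]

theorem all4 {a b c d : Finset (Fin 4)} (hP : s.IsPth a P) (hQ : s.IsPth b Q) (hX : s.IsPth c X)
    (hY : s.IsPth d Y) : ∀ i, s.IsPth (![a, b, c, d] i) (![P, Q, X, Y] i) := by
  intro i
  fin_cases i
  · exact hP
  · exact hQ
  · exact hX
  · exact hY

theorem dpair_ok {a b : Bool} {p : Fin 4 → Finset (Sym2 V)}
    (ha : a = true → Dj (p 0) (p 2) ∧ Dj (p 1) (p 3))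
    (hb : b = true → Dj (p 0) (p 3) ∧ Dj (p 1) (p 2)) : ∀ y ∈ dpair a b, Dj (p y.1) (p y.2) := by
  intro y hy
  cases a <;> cases b <;> simp [dpair] at hy
  · rcases hy with rfl | rfl
    · exact (hb rfl).1
    · exact (hb rfl).2
  · rcases hy with rfl | rfl
    · exact (ha rfl).1
    · exact (ha rfl).2
  · rcases hy with rfl | rfl | rfl | rfl
    · exact (hb rfl).1
    · exact (ha rfl).1
    · exact (ha rfl).2
    · exact (hb rfl).2

theorem dpair2_ok {a b : Bool} {p : Fin 4 → Finset (Sym2 V)}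
    (ha : a = true → Dj (p 2) (p 3))
    (hb : b = true → Dj (p 0) (p 1)) : ∀ y ∈ dpair2 a b, Dj (p y.1) (p y.2) := by
  intro y hy
  cases a <;> cases b <;> simp [dpair2] at hy
  · rw [hy]; exact hb rfl
  · rw [hy]; exact ha rfl
  · rcases hy with rfl | rfl
    · exact ha rfl
    · exact hb rfl

theorem good_al (hF : ∀ K ∈ F, s.IsPth ∅ K)
    (hP : s.IsPth {0, 3} P) (hP' : s.IsPth {0, 3} P') (hQ : s.IsPth {1, 2} Q)
    (hQ' : s.IsPth {1, 2} Q') (hT : T = F + {P, P', Q, Q'}) (hcov : ∀ e ∈ s.E, cov T e = 2) :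
    Good s T := by
  classical
  have hn := two_ne hF hP hP' hQ hQ' (hT ▸ hcov) (by decide) (by decide)
  set a := decide (Dj P Q ∧ Dj P' Q') with ha
  set b := decide (Dj P Q' ∧ Dj P' Q) with hb
  have u1 : (s.F {1, 3} T).card ≤ 1 := by
    have := upper1 (S := s.F {1, 3} T)
      (F + {s.glue P {3}, s.glue P' {3}, s.glue Q {1}, s.glue Q' {1}}) True
      (fun d hd => ⟨trivial, inv_al (extF1 hd) hF hP hP' hQ hQ' hT⟩)
    simpa using this
  have u2 : (s.F {0, 2} T).card ≤ a.toNat + b.toNat := by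
    refine upper (F + {s.rot.glue (Q ∪ P) {1, 3}, s.rot.glue (Q' ∪ P') {1, 3}})
      (F + {s.rot.glue (Q ∪ P') {1, 3}, s.rot.glue (Q' ∪ P) {1, 3}}) _ _ ?_
    intro d hd
    rcases inv_al2 (extF2 hd) (fun K hK => (s.rot_pth (by decide)).2 (hF K hK))
      ((s.rot_pth (by decide)).2 hQ) ((s.rot_pth (by decide)).2 hP) ((s.rot_pth (by decide)).2 hQ')
      ((s.rot_pth (by decide)).2 hP') (by rw [hT]; exact (mperm F P P' Q Q').1) with
      ⟨h1, h2, h3⟩ | ⟨h1, h2, h3⟩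
    · exact Or.inl ⟨⟨h1.symm, h2.symm⟩, h3⟩
    · exact Or.inr ⟨⟨h2.symm, h1.symm⟩, h3⟩
  have hl := codes hF (all4 hP hP' hQ hQ') (inj4 hn.1 (pth_ne hP hQ (by decide))
    (pth_ne hP hQ' (by decide)) (pth_ne hP' hQ (by decide)) (pth_ne hP' hQ' (by decide)) hn.2) hT
    hcov (dpair a b) (dpair_ok (by intro h; simpa [a] using h) (by intro h; simpa [b] using h))
    (salpha a b) (salpha_ok a b).1
  have := (salpha_ok a b).2
  unfold Good
  omega

theorem good_de (hF : ∀ K ∈ F, s.IsPth ∅ K)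
    (hP : s.IsPth {0, 2} P) (hP' : s.IsPth {0, 2} P') (hQ : s.IsPth {1, 3} Q)
    (hQ' : s.IsPth {1, 3} Q') (hT : T = F + {P, P', Q, Q'}) (hcov : ∀ e ∈ s.E, cov T e = 2) :
    Good s T := by
  classical
  have hn := two_ne hF hP hP' hQ hQ' (hT ▸ hcov) (by decide) (by decide)
  set a := decide (Dj P Q ∧ Dj P' Q') with ha
  set b := decide (Dj P Q' ∧ Dj P' Q) with hb
  have u1 : (s.F {1, 3} T).card ≤ a.toNat + b.toNat := by
    refine upper (F + {s.glue (P ∪ Q) {1, 3}, s.glue (P' ∪ Q') {1, 3}})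
      (F + {s.glue (P ∪ Q') {1, 3}, s.glue (P' ∪ Q) {1, 3}}) _ _ ?_
    intro d hd
    rcases inv_de (extF1 hd) hF hP hQ hP' hQ' (by rw [hT]; exact (mperm F P P' Q Q').2.1) with
      ⟨h1, h2, h3⟩ | ⟨h1, h2, h3⟩
    · exact Or.inl ⟨⟨h1, h2⟩, h3⟩
    · exact Or.inr ⟨⟨h1, h2⟩, h3⟩
  have u2 : (s.F {0, 2} T).card ≤ a.toNat + b.toNat := by
    refine upper (F + {s.rot.glue (Q ∪ P) {1, 3}, s.rot.glue (Q' ∪ P') {1, 3}})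
      (F + {s.rot.glue (Q ∪ P') {1, 3}, s.rot.glue (Q' ∪ P) {1, 3}}) _ _ ?_
    intro d hd
    rcases inv_de (extF2 hd) (fun K hK => (s.rot_pth (by decide)).2 (hF K hK))
      ((s.rot_pth (by decide)).2 hQ) ((s.rot_pth (by decide)).2 hP) ((s.rot_pth (by decide)).2 hQ')
      ((s.rot_pth (by decide)).2 hP') (by rw [hT]; exact (mperm F P P' Q Q').1) with
      ⟨h1, h2, h3⟩ | ⟨h1, h2, h3⟩
    · exact Or.inl ⟨⟨h1.symm, h2.symm⟩, h3⟩
    · exact Or.inr ⟨⟨h2.symm, h1.symm⟩, h3⟩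
  have hl := codes hF (all4 hP hP' hQ hQ') (inj4 hn.1 (pth_ne hP hQ (by decide))
    (pth_ne hP hQ' (by decide)) (pth_ne hP' hQ (by decide)) (pth_ne hP' hQ' (by decide)) hn.2) hT
    hcov (dpair a b) (dpair_ok (by intro h; simpa [a] using h) (by intro h; simpa [b] using h))
    (sdelta a b) (sdelta_ok a b).1
  have := (sdelta_ok a b).2
  have := a.toNat_le
  have := b.toNat_le
  unfold Good
  omega

theorem good_be (hF : ∀ K ∈ F, s.IsPth ∅ K)
    (hP : s.IsPth {0, 3} P) (hQ : s.IsPth {1, 2} Q) (hX : s.IsPth {0, 1} X)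
    (hY : s.IsPth {2, 3} Y) (hT : T = F + {P, Q, X, Y}) (hcov : ∀ e ∈ s.E, cov T e = 2) :
    Good s T := by
  classical
  set a := decide (Dj X Y) with ha
  set b := decide (Dj P Q) with hb
  have u1 : (s.F {1, 3} T).card ≤ a.toNat :=
    upper1 _ _ fun d hd => inv_be (extF1 hd) hF hP hQ hX hY hT
  have u2 : (s.F {0, 2} T).card ≤ b.toNat := by
    refine upper1 (F + {s.rot.glue X {3}, s.rot.glue Y {1}, s.rot.glue (Q ∪ P) {1, 3}}) _ ?_
    intro d hd
    obtain ⟨h1, h2⟩ := inv_be (extF2 hd) (fun K hK => (s.rot_pth (by decide)).2 (hF K hK))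
      ((s.rot_pth (by decide)).2 hX) ((s.rot_pth (by decide)).2 hY) ((s.rot_pth (by decide)).2 hQ)
      ((s.rot_pth (by decide)).2 hP) (by rw [hT]; exact (mperm F P Q X Y).2.2.1)
    exact ⟨h1.symm, h2⟩
  have hl := codes hF (all4 hP hQ hX hY) (inj4 (pth_ne hP hQ (by decide)) (pth_ne hP hX (by decide))
    (pth_ne hP hY (by decide)) (pth_ne hQ hX (by decide)) (pth_ne hQ hY (by decide))
    (pth_ne hX hY (by decide))) hT
    hcov (dpair2 a b) (dpair2_ok (by intro h; simpa [a] using h) (by intro h; simpa [b] using h))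
    (sbeta a b) (sbeta_ok a b).1
  have := (sbeta_ok a b).2
  unfold Good
  omega

theorem good_ga (hF : ∀ K ∈ F, s.IsPth ∅ K)
    (hP : s.IsPth {0, 3} P) (hQ : s.IsPth {1, 2} Q) (hX : s.IsPth {0, 2} X)
    (hY : s.IsPth {1, 3} Y) (hT : T = F + {P, Q, X, Y}) (hcov : ∀ e ∈ s.E, cov T e = 2) :
    Good s T := by
  classical
  have u1 : (s.F {1, 3} T).card ≤ (decide (Dj X Y)).toNat :=
    upper1 _ _ fun d hd => inv_ga (extF1 hd) hF hP hQ hX hY hT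
  have u2 : (s.F {0, 2} T).card ≤ (decide (Dj X Y)).toNat := by
    refine upper1 (F + {s.rot.glue (Q ∪ P) {1, 3}, s.rot.glue (Y ∪ X) {1, 3}}) _ ?_
    intro d hd
    obtain ⟨-, h1, h2⟩ := inv_ga2 (extF2 hd) (fun K hK => (s.rot_pth (by decide)).2 (hF K hK))
      ((s.rot_pth (by decide)).2 hQ) ((s.rot_pth (by decide)).2 hP) ((s.rot_pth (by decide)).2 hY)
      ((s.rot_pth (by decide)).2 hX) (by rw [hT]; exact (mperm F P Q X Y).2.2.2.1)
    exact ⟨h1.symm, h2⟩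
  unfold Good
  by_cases hd : Dj X Y
  · have hl := codes hF (all4 hP hQ hX hY) (inj4 (pth_ne hP hQ (by decide)) (pth_ne hP hX (by decide))
      (pth_ne hP hY (by decide)) (pth_ne hQ hX (by decide)) (pth_ne hQ hY (by decide))
      (pth_ne hX hY (by decide))) hT
      hcov {(2, 3)} (by intro y hy; rw [Finset.mem_singleton.1 hy]; exact hd)
      sgamma sgamma_ok.1
    have := sgamma_ok.2
    simp only [hd, decide_true, Bool.toNat_true] at u1 u2
    omega
  · simp only [hd, decide_false, Bool.toNat_false] at u1 u2
    omega

theorem good_ext (h : Ext s D T) (hcov : ∀ e ∈ s.E, cov T e = 2) : Good s T := by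
  cases h with
  | al _ _ _ _ _ eF e1 e2 e3 e4 => exact good_al eF e1 e2 e3 e4 rfl hcov
  | be _ _ _ _ _ eF e1 e2 e3 e4 => exact good_be eF e1 e2 e3 e4 rfl hcov
  | ga _ _ _ _ _ eF e1 e2 e3 e4 => exact good_ga eF e1 e2 e3 e4 rfl hcov
  | al' _ _ _ _ _ eF e1 e2 e3 e4 =>
    refine (good_rot _).1 ?_
    exact good_al (fun K hK => (s.rot_pth (by decide)).2 (eF K hK))
      ((s.rot_pth (by decide)).2 e1) ((s.rot_pth (by decide)).2 e3) ((s.rot_pth (by decide)).2 e2)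
      ((s.rot_pth (by decide)).2 e4) (mperm _ _ _ _ _).2.1 hcov
  | ga' _ _ _ _ _ eF e1 e2 e3 e4 =>
    refine (good_rot _).1 ?_
    exact good_ga (fun K hK => (s.rot_pth (by decide)).2 (eF K hK))
      ((s.rot_pth (by decide)).2 e1) ((s.rot_pth (by decide)).2 e2) ((s.rot_pth (by decide)).2 e4)
      ((s.rot_pth (by decide)).2 e3) (mperm _ _ _ _ _).2.2.2.2.2.2 hcov
  | de _ _ _ _ _ eF e1 e2 e3 e4 => exact good_de eF e1 e3 e2 e4 (mperm _ _ _ _ _).2.1 hcov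

theorem good (s : Setup V) (T : Multiset (Finset (Sym2 V))) : Good s T := by
  have hc : ∀ J, (∃ D, D ∈ s.F J T) → ∀ e ∈ s.E, cov T e = 2 := by
    rintro J ⟨D, hD⟩ e he
    rw [mem_F] at hD
    rw [← hD.2, s.cov_tr _ he, hD.1.2 e (Finset.mem_union_left _ he)]
  by_cases h1 : ∃ D, D ∈ s.F {1, 3} T
  · have := hc _ h1
    obtain ⟨D, hD⟩ := h1
    exact good_ext (extF1 hD) this
  by_cases h2 : ∃ D, D ∈ s.F {0, 2} T
  · have := hc _ h2
    obtain ⟨D, hD⟩ := h2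
    exact (good_rot _).1 (good_ext (extF2 hD) this)
  push Not at h1 h2
  unfold Good
  rw [Finset.eq_empty_of_forall_notMem h1, Finset.eq_empty_of_forall_notMem h2]
  simp

theorem total (s : Setup V) :
    2 * (s.N {1, 3}).card + 2 * (s.N {0, 2}).card ≤ (s.N Finset.univ).card := by
  classical
  let R := (s.N {1, 3}).image s.tr ∪ (s.N {0, 2}).image s.tr ∪ (s.N Finset.univ).image s.tr
  have h : ∀ J, (∀ C ∈ s.N J, s.tr C ∈ R) → (s.N J).card = ∑ T ∈ R, (s.F J T).card := by
    intro J hJ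
    exact Finset.card_eq_sum_card_fiberwise hJ
  rw [h {1, 3} (fun C hC => by
      simp only [R, Finset.mem_union]; exact Or.inl (Or.inl (Finset.mem_image_of_mem _ hC))),
    h {0, 2} (fun C hC => by
      simp only [R, Finset.mem_union]; exact Or.inl (Or.inr (Finset.mem_image_of_mem _ hC))),
    h Finset.univ (fun C hC => by
      simp only [R, Finset.mem_union]; exact Or.inr (Finset.mem_image_of_mem _ hC)),
    Finset.mul_sum, Finset.mul_sum, ← Finset.sum_add_distrib]
  exact Finset.sum_le_sum fun T _ => good s T

end Setup
end Core7

section Core8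
set_option linter.unusedSectionVars false
set_option linter.unusedSimpArgs false
variable {V : Type*} [DecidableEq V]

theorem deg_eq_ncard {K : Finset (Sym2 V)} {x : V} {S : Set V} (hS : ∀ y, y ∈ S ↔ s(x, y) ∈ K) :
    deg K x = S.ncard := by
  unfold deg
  rw [← Set.ncard_coe_finset]
  have : ((K.filter (x ∈ ·) : Finset (Sym2 V)) : Set (Sym2 V)) = (fun y => s(x, y)) '' S := by
    ext e
    simp only [Finset.coe_filter, Set.mem_setOf_eq, Set.mem_image]
    constructor
    · rintro ⟨h1, h2⟩
      obtain ⟨y, rfl⟩ := Sym2.mem_iff_exists.1 h2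
      exact ⟨y, (hS y).2 h1, rfl⟩
    · rintro ⟨y, h, rfl⟩
      exact ⟨(hS y).1 h, by simp⟩
  rw [this, Set.ncard_image_of_injective]
  intro a b h
  exact Sym2.congr_right.1 h

/-- subgraph with a given edge set -/
def sub (G : SimpleGraph V) (K : Finset (Sym2 V)) : G.Subgraph where
  verts := {x | ∃ y, s(x, y) ∈ K ∧ G.Adj x y}
  Adj x y := s(x, y) ∈ K ∧ G.Adj x y
  adj_sub h := h.2
  edge_vert h := ⟨_, h⟩
  symm := ⟨fun a b h => ⟨by rw [Sym2.eq_swap]; exact h.1, h.2.symm⟩⟩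

theorem sub_edge {G : SimpleGraph V} {K : Finset (Sym2 V)} (hK : ∀ e ∈ K, e ∈ G.edgeSet)
    (e : Sym2 V) : e ∈ (sub G K).edgeSet ↔ e ∈ K := by
  induction e with | _ a b =>
  rw [Subgraph.mem_edgeSet]
  exact ⟨fun h => h.1, fun h => ⟨h, hK _ h⟩⟩

theorem sub_circuit {G : SimpleGraph V} {K : Finset (Sym2 V)} (hK : ∀ e ∈ K, e ∈ G.edgeSet)
    (hc : IsCirc K) : IsCircuit (sub G K) := by
  classical
  constructor
  · rw [Subgraph.connected_iff]
    constructor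
    · rw [Subgraph.preconnected_iff]
      rintro ⟨x, hx⟩ ⟨y, hy⟩
      let X := K.filter (fun e => ∃ z : (sub G K).verts, z.1 ∈ e ∧ (sub G K).coe.Reachable ⟨x, hx⟩ z)
      have hX : X = K := by
        obtain ⟨w, hw⟩ := hx
        refine hc.1.2 X (Finset.filter_subset _ _) ⟨s(x, w), ?_⟩ ?_
        · exact Finset.mem_filter.2 ⟨hw.1, ⟨x, w, hw⟩, by simp, Reachable.refl _⟩
        · intro c hc d hd z h1 h2
          obtain ⟨hcK, t, ht, hr⟩ := Finset.mem_filter.1 hc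
          refine Finset.mem_filter.2 ⟨hd, ?_⟩
          obtain ⟨z', rfl⟩ := Sym2.mem_iff_exists.1 h1
          have hzz := hK _ hcK
          rw [mem_edgeSet] at hzz
          have hzv : z ∈ (sub G K).verts := ⟨z', hcK, hzz⟩
          refine ⟨⟨z, hzv⟩, h2, ?_⟩
          rcases Sym2.mem_iff.1 ht with h | h
          · have : t = ⟨z, hzv⟩ := Subtype.ext h
            rwa [← this]
          · refine hr.trans (Adj.reachable ?_)
            rw [Subgraph.coe_adj, h]
            exact ⟨by rw [Sym2.eq_swap]; exact hcK, hzz.symm⟩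
      obtain ⟨w, hw⟩ := hy
      have h1 : s(y, w) ∈ X := by rw [hX]; exact hw.1
      obtain ⟨-, t, ht, hr⟩ := Finset.mem_filter.1 h1
      rcases Sym2.mem_iff.1 ht with h | h
      · have : t = ⟨y, w, hw⟩ := Subtype.ext h
        rwa [← this]
      · refine hr.trans (Adj.reachable ?_)
        rw [Subgraph.coe_adj, h]
        exact ⟨by rw [Sym2.eq_swap]; exact hw.1, hw.2.symm⟩
    · obtain ⟨e, he⟩ := hc.1.1
      induction e with | _ a b => exact ⟨a, b, he, hK _ he⟩
  · rintro v ⟨w, hw⟩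
    rw [← deg_eq_ncard (K := K) (x := v)]
    · rcases hc.2 v with h | h
      · rw [deg_eq_zero] at h
        exact absurd (by simp) (h _ hw.1)
      · exact h
    · intro y
      exact ⟨fun h => h.1, fun h => ⟨h, hK _ h⟩⟩

theorem circuit_edge {G : SimpleGraph V} {H : G.Subgraph} (h : IsCircuit H) :
    ∃ e, e ∈ H.edgeSet := by
  obtain ⟨x, hx⟩ := (Subgraph.connected_iff.1 h.1).2
  have := h.2 x hx
  obtain ⟨y, hy⟩ := Set.nonempty_of_ncard_ne_zero (s := H.neighborSet x) (by omega)
  exact ⟨s(x, y), hy⟩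

theorem finite_CiDC [Fintype V] (G : SimpleGraph V) : {C | IsCiDC G C}.Finite := by
  classical
  have : Finite G.Subgraph := by
    refine Finite.of_injective (fun H : G.Subgraph => (H.verts, H.Adj)) ?_
    intro H H' h
    simp only [Prod.mk.injEq] at h
    exact Subgraph.ext h.1 h.2
  have := Fintype.ofFinite G.Subgraph
  refine (Set.finite_Iic (2 • (Finset.univ : Finset G.Subgraph).val)).subset ?_
  intro C hC
  rw [Set.mem_Iic, Multiset.le_iff_count]
  intro K
  rw [Multiset.count_nsmul, Multiset.count_univ]
  by_cases hK : K ∈ C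
  · obtain ⟨e, he⟩ := circuit_edge (hC.1 K hK)
    have h2 := hC.2 e (K.edgeSet_subset he)
    rw [← h2, mul_one]
    rw [Multiset.count]
    rw [Multiset.countP_eq_card_filter, Multiset.countP_eq_card_filter]
    apply Multiset.card_le_card
    apply Multiset.monotone_filter_right
    rintro b rfl; exact he
  · simp [hK]

theorem nu_lower [Fintype V] (s : Setup V) (G : SimpleGraph V)
    (hG : ∀ e, e ∈ G.edgeSet ↔ e ∈ s.E ∪ s.g Finset.univ) :
    (s.N Finset.univ).card ≤ nu G := by
  classical
  unfold nu
  rw [← Set.ncard_coe_finset]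
  have hs : ∀ C ∈ s.N Finset.univ, ∀ K ∈ C, ∀ e ∈ K, e ∈ G.edgeSet := by
    intro C hC K hK e he
    rw [hG]
    exact ((s.mem_N.1 hC).1 K hK).2 he
  apply Set.ncard_le_ncard_of_injOn (fun C => C.map (sub G)) _ _ (finite_CiDC G)
  · intro C hC
    have hC' := s.mem_N.1 hC
    refine ⟨?_, ?_⟩
    · intro H hH
      obtain ⟨K, hK, rfl⟩ := Multiset.mem_map.1 hH
      exact sub_circuit (hs C hC K hK) (hC'.1 K hK).1
    · intro e he
      rw [hG] at he
      rw [← hC'.2 e he, Multiset.countP_map, cov, Multiset.countP_eq_card_filter]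
      congr 1
      apply Multiset.filter_congr
      intro K hK
      exact sub_edge (hs C hC K hK) e
  · intro C hC C' hC' h
    have key : ∀ C ∈ s.N Finset.univ, (C.map (sub G)).map
        (fun H => Finset.univ.filter (fun e => e ∈ H.edgeSet)) = C := by
      intro C hC
      rw [Multiset.map_map]
      conv_rhs => rw [← Multiset.map_id C]
      apply Multiset.map_congr rfl
      intro K hK
      ext e
      simp [sub_edge (hs C hC K hK)]
    have h : C.map (sub G) = C'.map (sub G) := h
    rw [← key C hC, ← key C' hC', h]

end Core8

section Core9
set_option linter.unusedSectionVars false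
set_option linter.unusedSimpArgs false
variable {V : Type*} [DecidableEq V]

/-- replace the edge `f` by the set `R` -/
def sd (f : Sym2 V) (R M : Finset (Sym2 V)) : Finset (Sym2 V) := if f ∈ M then M.erase f ∪ R else M

/-- the path replacing `s(a, b)` -/
def pth (a x y b : V) : Finset (Sym2 V) := {s(a, x), s(x, y), s(y, b)}

theorem deg_single (e : Sym2 V) (z : V) : deg {e} z = if z ∈ e then 1 else 0 := by
  unfold deg
  rw [Finset.filter_singleton]
  split_ifs <;> rfl

theorem sd_circ {a b x y : V} {M : Finset (Sym2 V)} (hM : IsCirc M) (hx : deg M x = 0)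
    (hy : deg M y = 0) (hxy : x ≠ y) (hab : a ≠ b) (hax : a ≠ x) (hay : a ≠ y) (hbx : b ≠ x)
    (hby : b ≠ y) : IsCirc (sd s(a, b) (pth a x y b) M) := by
  unfold sd
  split_ifs with hf
  swap
  · exact hM
  rw [deg_eq_zero] at hx hy
  have hRM : ∀ e ∈ pth a x y b, e ∉ M := by
    intro e he h
    simp only [pth, Finset.mem_insert, Finset.mem_singleton] at he
    rcases he with rfl | rfl | rfl
    · exact hx _ h (by simp)
    · exact hx _ h (by simp)
    · exact hy _ h (by simp)
  have hdisj : Disjoint (M.erase s(a, b)) (pth a x y b) := by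
    rw [Finset.disjoint_right]
    intro e he h
    exact hRM e he (Finset.mem_of_mem_erase h)
  have r1 : s(a, x) ∈ pth a x y b := by simp [pth]
  have r2 : s(x, y) ∈ pth a x y b := by simp [pth]
  have r3 : s(y, b) ∈ pth a x y b := by simp [pth]
  constructor
  · refine ⟨⟨s(a, x), Finset.mem_union_right _ r1⟩, ?_⟩
    intro X hX hne hcl
    have hR : (∃ e ∈ pth a x y b, e ∈ X) → ∀ e ∈ pth a x y b, e ∈ X := by
      rintro ⟨e, he, heX⟩
      have m : s(x, y) ∈ X := by
        simp only [pth, Finset.mem_insert, Finset.mem_singleton] at he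
        rcases he with rfl | rfl | rfl
        · exact hcl _ heX _ (Finset.mem_union_right _ r2) x (by simp) (by simp)
        · exact heX
        · exact hcl _ heX _ (Finset.mem_union_right _ r2) y (by simp) (by simp)
      intro e he
      simp only [pth, Finset.mem_insert, Finset.mem_singleton] at he
      rcases he with rfl | rfl | rfl
      · exact hcl _ m _ (Finset.mem_union_right _ r1) x (by simp) (by simp)
      · exact m
      · exact hcl _ m _ (Finset.mem_union_right _ r3) y (by simp) (by simp)
    have hfX : s(a, b) ∉ X := by
      intro h
      rcases Finset.mem_union.1 (hX h) with h | h
      · simp at h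
      · exact hRM _ h hf
    let X' := M.filter (fun e => e ∈ X ∨ (e = s(a, b) ∧ s(x, y) ∈ X))
    have hX' : X' = M := by
      apply hM.1.2 X' (Finset.filter_subset _ _)
      · obtain ⟨e, he⟩ := hne
        rcases Finset.mem_union.1 (hX he) with h | h
        · exact ⟨e, Finset.mem_filter.2 ⟨Finset.mem_of_mem_erase h, Or.inl he⟩⟩
        · exact ⟨s(a, b), Finset.mem_filter.2 ⟨hf, Or.inr ⟨rfl, hR ⟨e, h, he⟩ _ r2⟩⟩⟩
      · intro c hc d hd z h1 h2
        refine Finset.mem_filter.2 ⟨hd, ?_⟩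
        obtain ⟨hcM, hc2⟩ := Finset.mem_filter.1 hc
        by_cases hdf : d = s(a, b)
        · right
          refine ⟨hdf, ?_⟩
          rcases hc2 with hc3 | hc3
          · subst hdf
            rcases Sym2.mem_iff.1 h2 with rfl | rfl
            · exact hR ⟨_, r1, hcl _ hc3 _ (Finset.mem_union_right _ r1) z h1 (by simp)⟩ _ r2
            · exact hR ⟨_, r3, hcl _ hc3 _ (Finset.mem_union_right _ r3) z h1 (by simp)⟩ _ r2
          · exact hc3.2
        · left
          have hdK : d ∈ M.erase s(a, b) ∪ pth a x y b :=
            Finset.mem_union_left _ (Finset.mem_erase.2 ⟨hdf, hd⟩)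
          rcases hc2 with hc3 | ⟨rfl, hc3⟩
          · exact hcl c hc3 d hdK z h1 h2
          · have := hR ⟨_, r2, hc3⟩
            rcases Sym2.mem_iff.1 h1 with rfl | rfl
            · exact hcl _ (this _ r1) d hdK z (by simp) h2
            · exact hcl _ (this _ r3) d hdK z (by simp) h2
    have hm : s(x, y) ∈ X := by
      have : s(a, b) ∈ X' := by rw [hX']; exact hf
      rcases (Finset.mem_filter.1 this).2 with h | h
      · exact absurd h hfX
      · exact h.2
    apply Finset.Subset.antisymm hX
    intro e he
    rcases Finset.mem_union.1 he with h | h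
    · rw [Finset.mem_erase] at h
      have : e ∈ X' := by rw [hX']; exact h.2
      rcases (Finset.mem_filter.1 this).2 with h' | h'
      · exact h'
      · exact absurd h'.1 h.1
    · exact hR ⟨_, r2, hm⟩ e h
  · intro z
    have h1 : deg M z = deg (M.erase s(a, b)) z + deg {s(a, b)} z := by
      rw [← deg_union (by simp), Finset.union_comm, ← Finset.insert_eq, Finset.insert_erase hf]
    have h2 : deg (pth a x y b) z = deg {s(a, x)} z + (deg {s(x, y)} z + deg {s(y, b)} z) := by
      rw [← deg_union, ← deg_union]
      · rfl
      · simp [hax, hay, hab]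
      · simp [hxy, hbx.symm]
    rw [deg_union hdisj, h2]
    have h3 := hM.2 z
    have h4 : z = x ∨ z = y → deg M z = 0 := by
      rintro (rfl | rfl) <;> rw [deg_eq_zero] <;> assumption
    clear hdisj h2 hRM hx hy
    simp only [deg_single, Sym2.mem_iff] at h1 ⊢
    generalize deg M z = m at h1 h3 h4
    generalize deg (M.erase s(a, b)) z = n at h1 ⊢
    by_cases za : z = a
    · subst za; simp [hax, hay, hab] at h1 ⊢; omega
    by_cases zb : z = b
    · subst zb; simp [hbx, hby, za] at h1 ⊢; omega
    by_cases zx : z = x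
    · subst zx; simp [za, zb, hxy] at h1 h4 ⊢; omega
    by_cases zy : z = y
    · subst zy; simp [za, zb, hxy.symm] at h1 h4 ⊢; omega
    simp [za, zb, zx, zy] at h1 ⊢; omega

/-- inverse of `sd` -/
def un (f m : Sym2 V) (R N : Finset (Sym2 V)) : Finset (Sym2 V) :=
  if m ∈ N then insert f (N \ R) else N

theorem un_sd {f m : Sym2 V} {R M : Finset (Sym2 V)} (hm : m ∈ R) (h : Disjoint M R) :
    un f m R (sd f R M) = M := by
  have hmM : m ∉ M := Finset.disjoint_right.1 h hm
  unfold un sd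
  by_cases hf : f ∈ M
  · rw [if_pos hf, if_pos (Finset.mem_union_right _ hm)]
    have : (M.erase f ∪ R) \ R = M.erase f := by
      rw [Finset.union_sdiff_right]
      exact Finset.sdiff_eq_self_of_disjoint (h.mono_left (Finset.erase_subset _ _))
    rw [this, Finset.insert_erase hf]
  · rw [if_neg hf, if_neg hmM]

section Im
variable [Fintype V] {W : Type*} (f : W → V) {G : SimpleGraph W}

open scoped Classical in
/-- image of the edge set of a subgraph -/
noncomputable def im (H : G.Subgraph) : Finset (Sym2 V) :=
  Finset.univ.filter (fun e => ∃ e' ∈ H.edgeSet, e'.map f = e)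

variable {f}

theorem mem_im (hf : Function.Injective f) {H : G.Subgraph} {a b : W} : s(f a, f b) ∈ im f H ↔ H.Adj a b := by
  classical
  simp only [im, Finset.mem_filter, Finset.mem_univ, true_and]
  constructor
  · rintro ⟨e, he, h⟩
    have : e = s(a, b) := Sym2.map.injective hf (by rw [h]; rfl)
    rw [this] at he
    exact he
  · intro h
    exact ⟨s(a, b), h, rfl⟩

theorem mem_im' (hf : Function.Injective f) {H : G.Subgraph} {e : Sym2 V} (h : e ∈ im f H) :
    ∃ a b, H.Adj a b ∧ e = s(f a, f b) := by
  classical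
  simp only [im, Finset.mem_filter, Finset.mem_univ, true_and] at h
  obtain ⟨e, he, rfl⟩ := h
  induction e with | _ a b => exact ⟨a, b, he, rfl⟩

theorem im_circ (hf : Function.Injective f) {H : G.Subgraph} (hH : IsCircuit H) : IsCirc (im f H) := by
  classical
  constructor
  · constructor
    · obtain ⟨x, hx⟩ := (Subgraph.connected_iff.1 hH.1).2
      have := hH.2 x hx
      obtain ⟨y, hy⟩ := Set.nonempty_of_ncard_ne_zero (s := H.neighborSet x) (by omega)
      exact ⟨s(f x, f y), (mem_im hf).2 hy⟩
    · intro X hX hne hcl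
      obtain ⟨e, he⟩ := hne
      obtain ⟨a, b, hab, rfl⟩ := mem_im' hf (hX he)
      have key : ∀ y : H.verts, H.coe.Reachable ⟨a, H.edge_vert hab⟩ y →
          ∀ z, H.Adj y.1 z → s(f y.1, f z) ∈ X := by
        intro y hy
        rw [reachable_iff_reflTransGen] at hy
        induction hy with
        | refl =>
          intro z hz
          exact hcl _ he _ ((mem_im hf).2 hz) (f a) (by simp) (by simp)
        | tail h1 h2 ih =>
          intro z hz
          have := ih _ h2
          exact hcl _ this _ ((mem_im hf).2 hz) _ (Sym2.mem_mk_right _ _) (by simp)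
      apply Finset.Subset.antisymm hX
      intro d hd
      obtain ⟨p, q, hpq, rfl⟩ := mem_im' hf hd
      exact key ⟨p, H.edge_vert hpq⟩ (hH.1.coe.preconnected _ _) q hpq
  · intro x
    by_cases h0 : deg (im f H) x = 0
    · exact Or.inl h0
    right
    rw [deg_eq_zero] at h0
    push Not at h0
    obtain ⟨e, he, hx⟩ := h0
    have : ∃ w ∈ H.verts, x = f w := by
      obtain ⟨a, b, hab, rfl⟩ := mem_im' hf he
      rcases Sym2.mem_iff.1 hx with h | h
      · exact ⟨a, H.edge_vert hab, h⟩
      · exact ⟨b, H.edge_vert hab.symm, h⟩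
    obtain ⟨w, hw, rfl⟩ := this
    rw [deg_eq_ncard (S := f '' H.neighborSet w), Set.ncard_image_of_injective _ hf, hH.2 w hw]
    intro y
    constructor
    · rintro ⟨b, hb, rfl⟩
      exact (mem_im hf).2 hb
    · intro h
      obtain ⟨a, b, hab, h'⟩ := mem_im' hf h
      rw [Sym2.eq_iff] at h'
      rcases h' with ⟨h1, rfl⟩ | ⟨h1, rfl⟩
      · rw [hf h1]; exact ⟨b, hab, rfl⟩
      · rw [hf h1]; exact ⟨a, hab.symm, rfl⟩

theorem im_inj (hf : Function.Injective f) {H H' : G.Subgraph} (hH : IsCircuit H) (hH' : IsCircuit H')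
    (h : im f H = im f H') : H = H' := by
  have hadj : ∀ a b, H.Adj a b ↔ H'.Adj a b := by
    intro a b
    rw [← mem_im hf, ← mem_im hf, h]
  have hv : ∀ H : G.Subgraph, IsCircuit H → ∀ a, a ∈ H.verts ↔ ∃ b, H.Adj a b := by
    intro H hH a
    constructor
    · intro ha
      have := hH.2 a ha
      obtain ⟨y, hy⟩ := Set.nonempty_of_ncard_ne_zero (s := H.neighborSet a) (by omega)
      exact ⟨y, hy⟩
    · rintro ⟨b, hb⟩
      exact H.edge_vert hb
  apply Subgraph.ext
  · ext a
    rw [hv H hH, hv H' hH']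
    simp only [hadj]
  · ext a b
    exact hadj a b
end Im
end Core9

section Core10
set_option linter.unusedSectionVars false
set_option linter.unusedSimpArgs false
variable {V : Type*} [DecidableEq V]

theorem mem_sd {f : Sym2 V} {R M : Finset (Sym2 V)} {e : Sym2 V} (hf : f ∉ R) :
    e ∈ sd f R M ↔ (e ∈ M ∧ e ≠ f) ∨ (f ∈ M ∧ e ∈ R) := by
  unfold sd
  split_ifs with h
  · simp [h, and_comm]
  · have : e ∈ M → e ≠ f := fun h1 h2 => h (h2 ▸ h1)
    simp [h]
    exact this

theorem taut1 {eM e0 e1 m0 m1 r0 r1 f01 b : Prop} (h : r0 → ¬ e1) (h2 : ¬ f01)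
    (h3 : ¬ b) :
    (((eM ∧ ¬ e0) ∨ (m0 ∧ r0)) ∧ ¬ e1) ∨ (((m1 ∧ ¬ f01) ∨ (m0 ∧ b)) ∧ r1) ↔
      (eM ∧ ¬ e0 ∧ ¬ e1) ∨ (m0 ∧ r0) ∨ (m1 ∧ r1) := by
  tauto

theorem taut2 {eM c m0 m1 r0 r1 : Prop} (h : ¬ eM) (h1 : r0) (h2 : ¬ r1) :
    (eM ∧ c) ∨ (m0 ∧ r0) ∨ (m1 ∧ r1) ↔ m0 := by
  tauto

theorem taut3 {eM c m0 m1 r0 r1 : Prop} (h : ¬ eM) (h1 : ¬ r0) (h2 : r1) :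
    (eM ∧ c) ∨ (m0 ∧ r0) ∨ (m1 ∧ r1) ↔ m1 := by
  tauto

theorem taut4 {eM e0 e1 m0 m1 r0 r1 : Prop} (h : ¬ e0) (h' : ¬ e1) (h1 : ¬ r0) (h2 : ¬ r1) :
    (eM ∧ ¬ e0 ∧ ¬ e1) ∨ (m0 ∧ r0) ∨ (m1 ∧ r1) ↔ eM := by
  tauto

theorem taut5 {x a b c d : Prop} : x ∨ a ∨ b ∨ c ∨ d ↔ x ∨ (b ∨ a) ∨ (c ∨ d) := by
  tauto

theorem vec_inj {a b c d : V} (h1 : a ≠ b) (h2 : a ≠ c) (h3 : a ≠ d) (h4 : b ≠ c) (h5 : b ≠ d)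
    (h6 : c ≠ d) : Function.Injective ![a, b, c, d] := by
  intro i j h
  fin_cases i <;> fin_cases j <;>
    simp [h1, h2, h3, h4, h5, h6, h1.symm, h2.symm, h3.symm, h4.symm, h5.symm, h6.symm] at h ⊢

theorem pth_v {a x y b : V} {e : Sym2 V} (h : e ∈ pth a x y b) : x ∈ e ∨ y ∈ e := by
  simp only [pth, Finset.mem_insert, Finset.mem_singleton] at h
  rcases h with rfl | rfl | rfl <;> simp

theorem pth_notv {a x y b z : V} {e : Sym2 V} (h : e ∈ pth a x y b) (h1 : z ≠ a) (h2 : z ≠ x)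
    (h3 : z ≠ y) (h4 : z ≠ b) : z ∉ e := by
  simp only [pth, Finset.mem_insert, Finset.mem_singleton] at h
  rcases h with rfl | rfl | rfl <;> simp [*]

theorem nu_upper [Fintype V] (s : Setup V) (hu : Function.Injective s.u) (A : Set V)
    (hA : ∀ x, x ∈ A ↔ ∃ k, x = s.v k) (G : SimpleGraph {x : V // x ∉ A})
    (n0 : s(s.u 0, s.u 3) ∉ s.E) (n1 : s(s.u 1, s.u 2) ∉ s.E)
    (hG : ∀ p q, G.Adj p q ↔ s(p.1, q.1) ∈ s.E ∨ s(p.1, q.1) = s(s.u 0, s.u 3) ∨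
      s(p.1, q.1) = s(s.u 1, s.u 2)) :
    nu G ≤ (s.N {1, 3}).card := by
  classical
  have hval : Function.Injective (Subtype.val : {x : V // x ∉ A} → V) := Subtype.val_injective
  have huA : ∀ k, s.u k ∉ A := by
    intro k h
    obtain ⟨j, hj⟩ := (hA _).1 h
    exact s.huv k j hj
  set f0 : Sym2 V := s(s.u 0, s.u 3) with hf0
  set f1 : Sym2 V := s(s.u 1, s.u 2) with hf1
  set R0 := pth (s.u 0) (s.v 0) (s.v 3) (s.u 3) with hR0
  set R1 := pth (s.u 1) (s.v 1) (s.v 2) (s.u 2) with hR1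
  let φ : G.Subgraph → Finset (Sym2 V) := fun H => sd f1 R1 (sd f0 R0 (im Subtype.val H))
  have vne : ∀ i j : Fin 4, i ≠ j → s.v i ≠ s.v j := fun i j h h' => h (s.v_inj h')
  have une : ∀ i j : Fin 4, i ≠ j → s.u i ≠ s.u j := fun i j h h' => h (hu h')
  have vu : ∀ i j : Fin 4, s.v i ≠ s.u j := fun i j h => s.huv j i h.symm
  -- vertices of the cycle are not met
  have hM : ∀ H : G.Subgraph, ∀ e ∈ im Subtype.val H, ∀ k, s.v k ∉ e := by
    intro H e he k hk
    obtain ⟨a, b, -, rfl⟩ := mem_im' hval he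
    rcases Sym2.mem_iff.1 hk with h | h
    · exact a.2 ((hA _).2 ⟨k, h.symm⟩)
    · exact b.2 ((hA _).2 ⟨k, h.symm⟩)
  have f0v : ∀ k, s.v k ∉ f0 := by intro k; simp [hf0, vu]
  have f1v : ∀ k, s.v k ∉ f1 := by intro k; simp [hf1, vu]
  have R0v : ∀ e ∈ R0, s.v 0 ∈ e ∨ s.v 3 ∈ e := fun e he => pth_v he
  have R1v : ∀ e ∈ R1, s.v 1 ∈ e ∨ s.v 2 ∈ e := fun e he => pth_v he
  have R0n1 : ∀ e ∈ R0, s.v 1 ∉ e := fun e he =>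
    pth_notv he (vu _ _) (vne _ _ (by decide)) (vne _ _ (by decide)) (vu _ _)
  have R0n2 : ∀ e ∈ R0, s.v 2 ∉ e := fun e he =>
    pth_notv he (vu _ _) (vne _ _ (by decide)) (vne _ _ (by decide)) (vu _ _)
  have hf00 : f0 ∉ R0 := fun h => (R0v _ h).elim (f0v _) (f0v _)
  have hf01 : f0 ∉ R1 := fun h => (R1v _ h).elim (f0v _) (f0v _)
  have hf10 : f1 ∉ R0 := fun h => (R0v _ h).elim (f1v _) (f1v _)
  have hf11 : f1 ∉ R1 := fun h => (R1v _ h).elim (f1v _) (f1v _)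
  have f01 : f1 ≠ f0 := by
    intro h
    rw [hf0, hf1, Sym2.eq_iff] at h
    rcases h with h | h
    · exact une _ _ (by decide) h.1
    · exact une _ _ (by decide) h.1
  have R01 : ∀ e ∈ R0, e ∉ R1 := fun e he h => (R1v _ h).elim (R0n1 e he) (R0n2 e he)
  have MR0 : ∀ H : G.Subgraph, Disjoint (im Subtype.val H) R0 := by
    intro H
    rw [Finset.disjoint_left]
    intro e he h
    exact (R0v _ h).elim (hM H e he _) (hM H e he _)
  have MR1 : ∀ H : G.Subgraph, Disjoint (im Subtype.val H) R1 := by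
    intro H
    rw [Finset.disjoint_left]
    intro e he h
    exact (R1v _ h).elim (hM H e he _) (hM H e he _)
  have mem1 : ∀ (H : G.Subgraph) e, e ∈ sd f0 R0 (im Subtype.val H) ↔
      (e ∈ im Subtype.val H ∧ e ≠ f0) ∨ (f0 ∈ im Subtype.val H ∧ e ∈ R0) :=
    fun H e => mem_sd hf00
  have memφ : ∀ (H : G.Subgraph) e, e ∈ φ H ↔
      (e ∈ im Subtype.val H ∧ e ≠ f0 ∧ e ≠ f1) ∨ (f0 ∈ im Subtype.val H ∧ e ∈ R0) ∨
        (f1 ∈ im Subtype.val H ∧ e ∈ R1) := by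
    intro H e
    show e ∈ sd f1 R1 _ ↔ _
    rw [mem_sd hf11, mem1, mem1]
    have : e ∈ R0 → e ≠ f1 := fun h h' => hf10 (h' ▸ h)
    exact taut1 this f01 hf10
  have sdR1 : ∀ H : G.Subgraph, Disjoint (sd f0 R0 (im Subtype.val H)) R1 := by
    intro H
    rw [Finset.disjoint_left]
    intro e he h
    rcases (mem1 H e).1 he with h' | h'
    · exact Finset.disjoint_left.1 (MR1 H) h'.1 h
    · exact R01 e h'.2 h
  have dz : ∀ (H : G.Subgraph) k, deg (im Subtype.val H) (s.v k) = 0 := by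
    intro H k
    rw [deg_eq_zero]
    exact fun e he => hM H e he k
  have circφ : ∀ H : G.Subgraph, IsCircuit H → IsCirc (φ H) := by
    intro H hH
    apply sd_circ (sd_circ (im_circ hval hH) (dz H 0) (dz H 3) (vne _ _ (by decide))
      (une _ _ (by decide)) (vu _ _).symm (vu _ _).symm (vu _ _).symm (vu _ _).symm)
      _ _ (vne _ _ (by decide))
      (une _ _ (by decide)) (vu _ _).symm (vu _ _).symm (vu _ _).symm (vu _ _).symm
    · rw [deg_eq_zero]
      intro e he
      rcases (mem1 H e).1 he with h | h
      · exact hM H e h.1 1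
      · exact R0n1 e h.2
    · rw [deg_eq_zero]
      intro e he
      rcases (mem1 H e).1 he with h | h
      · exact hM H e h.1 2
      · exact R0n2 e h.2
  have hc1 : s.c 1 = s(s.v 1, s.v 2) := rfl
  have hc3 : s.c 3 = s(s.v 0, s.v 3) := Sym2.eq_swap
  have R0E : R0 ⊆ s.E ∪ s.g {1, 3} := by
    intro e he
    rw [Finset.mem_union]
    simp only [hR0, pth, Finset.mem_insert, Finset.mem_singleton] at he
    rcases he with rfl | rfl | rfl
    · left; rw [Sym2.eq_swap]; exact s.hs 0
    · right; rw [← hc3, s.mem_g]; decide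
    · left; exact s.hs 3
  have R1E : R1 ⊆ s.E ∪ s.g {1, 3} := by
    intro e he
    rw [Finset.mem_union]
    simp only [hR1, pth, Finset.mem_insert, Finset.mem_singleton] at he
    rcases he with rfl | rfl | rfl
    · left; rw [Sym2.eq_swap]; exact s.hs 1
    · right; rw [← hc1, s.mem_g]; decide
    · left; exact s.hs 2
  have subφ : ∀ H : G.Subgraph, φ H ⊆ s.E ∪ s.g {1, 3} := by
    intro H e he
    rcases (memφ H e).1 he with ⟨h, h0, h1⟩ | h | h
    · obtain ⟨a, b, hab, rfl⟩ := mem_im' hval h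
      rcases (hG a b).1 hab.adj_sub with h | h | h
      · exact Finset.mem_union_left _ h
      · exact absurd h h0
      · exact absurd h h1
    · exact R0E h.2
    · exact R1E h.2
  -- every edge corresponds to an edge
  have corr0 : ∀ e ∈ R0, ∃ e' ∈ G.edgeSet, ∀ H : G.Subgraph, e ∈ φ H ↔ e' ∈ H.edgeSet := by
    intro e he
    refine ⟨s(⟨s.u 0, huA 0⟩, ⟨s.u 3, huA 3⟩), ?_, ?_⟩
    · rw [mem_edgeSet, hG]; right; left; rfl
    · intro H
      have h1 : e ∉ im Subtype.val H := fun h => Finset.disjoint_left.1 (MR0 H) h he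
      have h2 := R01 e he
      rw [memφ, Subgraph.mem_edgeSet, ← mem_im hval]
      show _ ↔ f0 ∈ _
      exact taut2 h1 he h2
  have corr1 : ∀ e ∈ R1, ∃ e' ∈ G.edgeSet, ∀ H : G.Subgraph, e ∈ φ H ↔ e' ∈ H.edgeSet := by
    intro e he
    refine ⟨s(⟨s.u 1, huA 1⟩, ⟨s.u 2, huA 2⟩), ?_, ?_⟩
    · rw [mem_edgeSet, hG]; right; right; rfl
    · intro H
      have h1 : e ∉ im Subtype.val H := fun h => Finset.disjoint_left.1 (MR1 H) h he
      have h2 : e ∉ R0 := fun h => R01 e h he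
      rw [memφ, Subgraph.mem_edgeSet, ← mem_im hval]
      show _ ↔ f1 ∈ _
      exact taut3 h1 h2 he
  have corr : ∀ e ∈ s.E ∪ s.g {1, 3}, ∃ e' ∈ G.edgeSet,
      ∀ H : G.Subgraph, e ∈ φ H ↔ e' ∈ H.edgeSet := by
    intro e he
    rcases Finset.mem_union.1 he with h | h
    · by_cases hk : ∃ k, s.v k ∈ e
      · obtain ⟨k, hk⟩ := hk
        have := s.hE e h k hk
        subst this
        fin_cases k
        · apply corr0; simp [hR0, pth, Sym2.eq_swap]
        · apply corr1; simp [hR1, pth, Sym2.eq_swap]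
        · apply corr1; simp [hR1, pth, Sym2.eq_swap]
        · apply corr0; simp [hR0, pth, Sym2.eq_swap]
      · induction e with | _ a b =>
        push Not at hk
        have ha : a ∉ A := by
          intro h'
          obtain ⟨k, rfl⟩ := (hA _).1 h'
          exact hk k (by simp)
        have hb : b ∉ A := by
          intro h'
          obtain ⟨k, rfl⟩ := (hA _).1 h'
          exact hk k (by simp)
        refine ⟨s(⟨a, ha⟩, ⟨b, hb⟩), ?_, ?_⟩
        · rw [mem_edgeSet, hG]; left; exact h
        · intro H
          have e0 : s(a, b) ≠ f0 := fun h' => n0 (h' ▸ h)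
          have e1 : s(a, b) ≠ f1 := fun h' => n1 (h' ▸ h)
          have r0 : s(a, b) ∉ R0 := fun h' => (R0v _ h').elim (hk _) (hk _)
          have r1 : s(a, b) ∉ R1 := fun h' => (R1v _ h').elim (hk _) (hk _)
          rw [memφ, Subgraph.mem_edgeSet, ← mem_im hval]
          show _ ↔ s(a, b) ∈ _
          exact taut4 e0 e1 r0 r1
    · simp only [Setup.g, Finset.mem_image, Finset.mem_insert, Finset.mem_singleton] at h
      obtain ⟨k, rfl | rfl, rfl⟩ := h
      · apply corr1; rw [hc1]; simp [hR1, pth]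
      · apply corr0; rw [hc3]; simp [hR0, pth]
  have injφ : Set.InjOn φ {H | IsCircuit H} := by
    intro H hH H' hH' h
    apply im_inj hval hH hH'
    have k1 : s(s.v 1, s.v 2) ∈ R1 := by simp [hR1, pth]
    have k0 : s(s.v 0, s.v 3) ∈ R0 := by simp [hR0, pth]
    have h : sd f1 R1 (sd f0 R0 (im Subtype.val H)) = sd f1 R1 (sd f0 R0 (im Subtype.val H')) := h
    rw [← un_sd (f := f0) k0 (MR0 H), ← un_sd (f := f1) k1 (sdR1 H), h, un_sd k1 (sdR1 H'),
      un_sd k0 (MR0 H')]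
  unfold nu
  rw [← Set.ncard_coe_finset]
  apply Set.ncard_le_ncard_of_injOn (fun C => C.map φ) _ _ (Finset.finite_toSet _)
  · intro C hC
    have hC : IsCiDC G C := hC
    rw [Finset.mem_coe, s.mem_N]
    refine ⟨?_, ?_⟩
    · intro K hK
      obtain ⟨H, hH, rfl⟩ := Multiset.mem_map.1 hK
      exact ⟨circφ H (hC.1 H hH), subφ H⟩
    · intro e he
      obtain ⟨e', he', h⟩ := corr e he
      rw [← hC.2 e' he', cov, Multiset.countP_map, Multiset.countP_eq_card_filter]
      congr 1
      apply Multiset.filter_congr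
      intro H hH
      exact h H
  · intro C hC C' hC' h
    have key : ∀ C, IsCiDC G C →
        (C.map φ).map (Function.invFunOn φ {H | IsCircuit H}) = C := by
      intro C hC
      rw [Multiset.map_map]
      conv_rhs => rw [← Multiset.map_id C]
      apply Multiset.map_congr rfl
      intro H hH
      exact injφ.leftInvOn_invFunOn (hC.1 H hH)
    have h : C.map φ = C'.map φ := h
    rw [← key C hC, ← key C' hC', h]

end Core10

theorem final {V : Type*} [Fintype V] (G : SimpleGraph V) (hcubic : IsCubic G)
    (v₁ v₂ v₃ v₄ u₁ u₂ u₃ u₄ : V)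
    (hv13 : v₁ ≠ v₃) (hv24 : v₂ ≠ v₄)
    (h12 : G.Adj v₁ v₂) (h23 : G.Adj v₂ v₃) (h34 : G.Adj v₃ v₄) (h41 : G.Adj v₄ v₁)
    (hu1 : G.Adj v₁ u₁) (hu2 : G.Adj v₂ u₂) (hu3 : G.Adj v₃ u₃) (hu4 : G.Adj v₄ u₄)
    (hu12 : u₁ ≠ u₂) (hu13 : u₁ ≠ u₃) (hu14 : u₁ ≠ u₄)
    (hu23 : u₂ ≠ u₃) (hu24 : u₂ ≠ u₄) (hu34 : u₃ ≠ u₄)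
    (huv : ∀ x ∈ ({u₁, u₂, u₃, u₄} : Set V), x ∉ ({v₁, v₂, v₃, v₄} : Set V))
    (hna12 : ¬ G.Adj u₁ u₂) (hna23 : ¬ G.Adj u₂ u₃)
    (hna34 : ¬ G.Adj u₃ u₄) (hna14 : ¬ G.Adj u₁ u₄)
    (G₁ G₂ : SimpleGraph {x : V // x ∉ ({v₁, v₂, v₃, v₄} : Set V)})
    (hG₁ : ∀ p q, G₁.Adj p q ↔ G.Adj p.1 q.1 ∨
      (p.1 = u₁ ∧ q.1 = u₄) ∨ (p.1 = u₄ ∧ q.1 = u₁) ∨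
      (p.1 = u₂ ∧ q.1 = u₃) ∨ (p.1 = u₃ ∧ q.1 = u₂))
    (hG₂ : ∀ p q, G₂.Adj p q ↔ G.Adj p.1 q.1 ∨
      (p.1 = u₁ ∧ q.1 = u₂) ∨ (p.1 = u₂ ∧ q.1 = u₁) ∨
      (p.1 = u₃ ∧ q.1 = u₄) ∨ (p.1 = u₄ ∧ q.1 = u₃)) :
    4 * min (nu G₁) (nu G₂) ≤ nu G := by
  classical
  let v : Fin 4 → V := ![v₁, v₂, v₃, v₄]
  let u : Fin 4 → V := ![u₁, u₂, u₃, u₄]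
  let Z : Finset (Sym2 V) := Finset.univ.image (fun k : Fin 4 => s(v k, v (k + 1)))
  have hZ : ∀ e, e ∈ Z ↔ e = s(v₁, v₂) ∨ e = s(v₂, v₃) ∨ e = s(v₃, v₄) ∨ e = s(v₄, v₁) := by
    intro e
    simp only [Z, Finset.mem_image, Finset.mem_univ, true_and, Fin.exists_fin_succ]
    simp [v, eq_comm]
  have a12 := h12.ne
  have a23 := h23.ne
  have a34 := h34.ne
  have a41 := h41.ne
  have v_inj : Function.Injective v := by
    exact vec_inj a12 hv13 a41.symm a23 hv24 a34
  have u_inj : Function.Injective u := by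
    exact vec_inj hu12 hu13 hu14 hu23 hu24 hu34
  have hvA : ∀ x, x ∈ ({v₁, v₂, v₃, v₄} : Set V) ↔ ∃ k, x = v k := by
    intro x
    simp [v, Fin.exists_fin_succ]
  have huA : ∀ k, u k ∈ ({u₁, u₂, u₃, u₄} : Set V) := by
    intro k
    fin_cases k <;> simp [u]
  have huv' : ∀ k j, u k ≠ v j := fun k j h => huv _ (huA k) ((hvA _).2 ⟨j, h⟩)
  have adjv : ∀ k, G.Adj (v k) (v (k + 1)) := by
    intro k
    fin_cases k <;> simp [v] <;> assumption
  have adju : ∀ k, G.Adj (v k) (u k) := by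
    intro k
    fin_cases k <;> simp [v, u] <;> assumption
  have hfin : ∀ x, (G.neighborSet x).Finite := fun x => Set.toFinite _
  have hnb : ∀ k y, G.Adj (v k) y → y = v (k + 1) ∨ y = v (k - 1) ∨ y = u k := by
    intro k y hy
    have hsub : ({v (k + 1), v (k - 1), u k} : Set V) ⊆ G.neighborSet (v k) := by
      rintro z (rfl | rfl | rfl)
      · exact adjv k
      · have := adjv (k - 1)
        rw [sub_add_cancel] at this
        exact this.symm
      · exact adju k
    have hc : ({v (k + 1), v (k - 1), u k} : Set V).ncard = 3 := by
      rw [Set.ncard_eq_three]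
      refine ⟨_, _, _, ?_, ?_, ?_, rfl⟩
      · intro h
        have := v_inj h
        revert this
        clear * -
        revert k
        decide
      · exact (huv' _ _).symm
      · exact (huv' _ _).symm
    have := Set.eq_of_subset_of_ncard_le hsub (by rw [hc, hcubic]) (hfin _)
    have hy' : y ∈ ({v (k + 1), v (k - 1), u k} : Set V) := by rw [this]; exact hy
    simpa using hy'
  have Zoff : ∀ e ∈ Z, ∀ k, u k ∉ e := by
    intro e he k hk
    obtain ⟨j, -, rfl⟩ := Finset.mem_image.1 he
    rcases Sym2.mem_iff.1 hk with h | h <;> exact huv' _ _ h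
  let s : Setup V :=
    { v := v
      u := u
      E := G.edgeFinset \ Z
      v_inj := v_inj
      huv := huv'
      noloop := by
        intro e he
        rw [Finset.mem_sdiff, mem_edgeFinset] at he
        exact G.not_isDiag_of_mem_edgeSet he.1
      hE := by
        intro e he k hk
        rw [Finset.mem_sdiff, mem_edgeFinset] at he
        obtain ⟨y, rfl⟩ := hk
        rcases hnb k y he.1 with rfl | rfl | rfl
        · exact absurd (Finset.mem_image.2 ⟨k, Finset.mem_univ _, rfl⟩) he.2
        · refine absurd (Finset.mem_image.2 ⟨k - 1, Finset.mem_univ _, ?_⟩) he.2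
          rw [sub_add_cancel, Sym2.eq_swap]
        · rfl
      hs := by
        intro k
        rw [Finset.mem_sdiff, mem_edgeFinset]
        exact ⟨adju k, fun h => Zoff _ h k (by simp)⟩
      hdeg := by
        intro k
        rw [deg_eq_ncard (S := G.neighborSet (u k)), hcubic]
        intro y
        rw [Finset.mem_sdiff, mem_edgeFinset]
        exact ⟨fun h => ⟨h, fun h' => Zoff _ h' k (by simp)⟩, fun h => h.1⟩ }
  have hsE : ∀ e, e ∈ s.E ↔ e ∈ G.edgeSet ∧ e ∉ Z := by
    intro e
    show e ∈ G.edgeFinset \ Z ↔ _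
    rw [Finset.mem_sdiff, mem_edgeFinset]
  have hsub : ∀ a b : {x : V // x ∉ ({v₁, v₂, v₃, v₄} : Set V)},
      s(a.1, b.1) ∈ s.E ↔ G.Adj a.1 b.1 := by
    intro a b
    rw [hsE, mem_edgeSet, and_iff_left_iff_imp]
    intro _ h
    obtain ⟨j, -, h⟩ := Finset.mem_image.1 h
    have : v j ∈ s(a.1, b.1) := by rw [← h]; simp
    rcases Sym2.mem_iff.1 this with h | h
    · exact a.2 ((hvA _).2 ⟨j, h.symm⟩)
    · exact b.2 ((hvA _).2 ⟨j, h.symm⟩)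
  have low := nu_lower s G (by
    intro e
    rw [Finset.mem_union, hsE]
    show _ ↔ _ ∨ e ∈ Z
    constructor
    · intro h
      by_cases h' : e ∈ Z
      · exact Or.inr h'
      · exact Or.inl ⟨h, h'⟩
    · rintro (h | h)
      · exact h.1
      · obtain ⟨j, -, rfl⟩ := Finset.mem_image.1 h
        exact adjv j)
  have up1 : nu G₁ ≤ (s.N {1, 3}).card := by
    apply nu_upper s u_inj _ hvA
    · intro h
      exact hna14 ((hsE _).1 h).1
    · intro h
      exact hna23 ((hsE _).1 h).1
    · intro p q
      rw [hsub, hG₁, Sym2.eq_iff, Sym2.eq_iff]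
      show _ ↔ _ ∨ ((p.1 = u₁ ∧ q.1 = u₄) ∨ (p.1 = u₄ ∧ q.1 = u₁)) ∨
        ((p.1 = u₂ ∧ q.1 = u₃) ∨ (p.1 = u₃ ∧ q.1 = u₂))
      rw [or_assoc]
  have up2 : nu G₂ ≤ (s.rot.N {1, 3}).card := by
    apply nu_upper s.rot _ _ _
    · intro h
      have h : s(u₂, u₁) ∈ s.E := h
      exact hna12 ((hsE _).1 h).1.symm
    · intro h
      have h : s(u₃, u₄) ∈ s.E := h
      exact hna34 ((hsE _).1 h).1
    · intro p q
      rw [s.rot_E, hsub, hG₂, Sym2.eq_iff, Sym2.eq_iff]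
      show _ ↔ _ ∨ ((p.1 = u₂ ∧ q.1 = u₁) ∨ (p.1 = u₁ ∧ q.1 = u₂)) ∨
        ((p.1 = u₃ ∧ q.1 = u₄) ∨ (p.1 = u₄ ∧ q.1 = u₃))
      exact taut5
    · intro i j h
      have h : u (i + 1) = u (j + 1) := h
      exact add_right_cancel (u_inj h)
    · intro x
      rw [hvA]
      constructor
      · rintro ⟨k, rfl⟩
        refine ⟨k - 1, ?_⟩
        show v k = v (k - 1 + 1)
        rw [sub_add_cancel]
      · rintro ⟨k, rfl⟩
        exact ⟨k + 1, rfl⟩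
  have hrot : s.rot.N {1, 3} = s.N {0, 2} := by
    ext C
    rw [Setup.mem_N, Setup.mem_N, s.rot_IsDC (J := {0, 2}) (by decide)]
  rw [hrot] at up2
  have := s.total
  have m1 := min_le_left (nu G₁) (nu G₂)
  have m2 := min_le_right (nu G₁) (nu G₂)
  omega

/-- Reducing a 4-cycle `v₁v₂v₃v₄` in a cyclically 4-edge-connected cubic graph:
deleting the cycle vertices and rejoining the third neighbors `u₁, u₂, u₃, u₄` either by
the edges `u₁u₄, u₂u₃` (giving `G₁`) or by the edges `u₁u₂, u₃u₄` (giving `G₂`) yields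
`ν(G) ≥ 4 · min{ν(G₁), ν(G₂)}`. -/
theorem stmt11 {V : Type*} [Fintype V] (G : SimpleGraph V)
    (hcyc : CyclicallyFourEdgeConnected G) (hcubic : IsCubic G)
    (v₁ v₂ v₃ v₄ u₁ u₂ u₃ u₄ : V)
    (hv13 : v₁ ≠ v₃) (hv24 : v₂ ≠ v₄)
    (h12 : G.Adj v₁ v₂) (h23 : G.Adj v₂ v₃) (h34 : G.Adj v₃ v₄) (h41 : G.Adj v₄ v₁)
    (hu1 : G.Adj v₁ u₁) (hu2 : G.Adj v₂ u₂) (hu3 : G.Adj v₃ u₃) (hu4 : G.Adj v₄ u₄)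
    (hu12 : u₁ ≠ u₂) (hu13 : u₁ ≠ u₃) (hu14 : u₁ ≠ u₄)
    (hu23 : u₂ ≠ u₃) (hu24 : u₂ ≠ u₄) (hu34 : u₃ ≠ u₄)
    (huv : ∀ x ∈ ({u₁, u₂, u₃, u₄} : Set V), x ∉ ({v₁, v₂, v₃, v₄} : Set V))
    (hna12 : ¬ G.Adj u₁ u₂) (hna23 : ¬ G.Adj u₂ u₃)
    (hna34 : ¬ G.Adj u₃ u₄) (hna14 : ¬ G.Adj u₁ u₄)
    (G₁ G₂ : SimpleGraph {x : V // x ∉ ({v₁, v₂, v₃, v₄} : Set V)})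
    (hG₁ : ∀ p q, G₁.Adj p q ↔ G.Adj p.1 q.1 ∨
      (p.1 = u₁ ∧ q.1 = u₄) ∨ (p.1 = u₄ ∧ q.1 = u₁) ∨
      (p.1 = u₂ ∧ q.1 = u₃) ∨ (p.1 = u₃ ∧ q.1 = u₂))
    (hG₂ : ∀ p q, G₂.Adj p q ↔ G.Adj p.1 q.1 ∨
      (p.1 = u₁ ∧ q.1 = u₂) ∨ (p.1 = u₂ ∧ q.1 = u₁) ∨
      (p.1 = u₃ ∧ q.1 = u₄) ∨ (p.1 = u₄ ∧ q.1 = u₃)) :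
    4 * min (nu G₁) (nu G₂) ≤ nu G := by
  exact final G hcubic v₁ v₂ v₃ v₄ u₁ u₂ u₃ u₄ hv13 hv24 h12 h23 h34 h41 hu1 hu2 hu3 hu4
    hu12 hu13 hu14 hu23 hu24 hu34 huv hna12 hna23 hna34 hna14 G₁ G₂ hG₁ hG₂

end CiDC
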